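/- arXiv:2408.04618 — 2 statements merged into one kernel-verified Lean document; each statement's English description precedes it below -/
import Mathlib

section
/- There exists a constant C > 0 such that the following holds. Let C1 and C2 be two longest cycles in a finite simple graph G with k := |V(C1) ∩ V(C2)| > 0, let A := V(C1) \ V(C2) and B := V(C2) \ V(C1), and let S be a minimum A–B separator in G. Then |S| ≤ C · k^{8/5}. -/
open SimpleGraph

/-- `c` is a longest cycle in `G`: it is a cycle and its length is at least
the length of every cycle in `G`. -/
def IsLongestCycle {V : Type*} (G : SimpleGraph V) {v : V} (c : G.Walk v v) : Prop :=
  c.IsCycle ∧ ∀ (u : V) (c' : G.Walk u u), c'.IsCycle → c'.length ≤ c.length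

/-- `S` is an `A`–`B` separator in `G`: every path with one endpoint in `A` and the
other in `B` contains a vertex of `S`. -/
def IsSeparator {V : Type*} (G : SimpleGraph V) (A B S : Finset V) : Prop :=
  ∀ (a b : V), a ∈ A → b ∈ B → ∀ p : G.Walk a b, p.IsPath → ∃ s ∈ S, s ∈ p.support

/-- `S` is a minimum `A`–`B` separator in `G`. -/
def IsMinSeparator {V : Type*} (G : SimpleGraph V) (A B S : Finset V) : Prop :=
  IsSeparator G A B S ∧ ∀ S' : Finset V, IsSeparator G A B S' → S.card ≤ S'.card

open SimpleGraph
namespace LC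

variable {V : Type*} {G : SimpleGraph V}

/-- cyclic vertex list of a cycle -/
def CycL (G : SimpleGraph V) (l : List V) : Prop :=
  l.Nodup ∧ 3 ≤ l.length ∧ Cycle.Chain G.Adj (l : Cycle V)

theorem exists_walk_of_chain : ∀ (l : List V) (x y : V), List.IsChain G.Adj (x :: l) →
    (x :: l).getLast? = some y → ∃ p : G.Walk x y, p.support = x :: l := by
  intro l
  induction l with
  | nil => 
    intro x y _ h
    simp at h
    subst h
    exact ⟨Walk.nil, rfl⟩
  | cons z t ih => 
    intro x y h1 h2
    rw [List.isChain_cons_cons] at h1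
    obtain ⟨p, hp⟩ := ih z y h1.2 (by simpa using h2)
    exact ⟨Walk.cons h1.1 p, by simp [hp]⟩

theorem CycL.exists_walk {l : List V} (h : CycL G l) :
    ∃ (u : V) (c : G.Walk u u), c.IsCycle ∧ c.length = l.length := by
  obtain ⟨hn, h3, hc⟩ := h
  match l, h3 with
  | x :: y :: t, h3 =>
    rw [Cycle.chain_coe_cons] at hc
    simp only [List.cons_append, List.isChain_cons_cons] at hc
    obtain ⟨p, hp⟩ := exists_walk_of_chain (t ++ [x]) y x (by simpa using hc.2) (by rw [← List.cons_append, List.getLast?_append]; rfl)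
    have hlen : p.length = t.length + 1 := by
      have := p.length_support
      rw [hp] at this
      simp at this
      omega
    refine ⟨x, Walk.cons hc.1 p, ?_, ?_⟩
    · rw [Walk.cons_isCycle_iff]
      have hpath : p.IsPath := by
        apply Walk.IsPath.mk'
        rw [hp]
        have : (x :: (y :: t)).Nodup := hn
        have h' : ((y :: t) ++ [x]).Nodup := by
          rw [List.nodup_append_comm]; simpa using this
        simpa using h'
      refine ⟨hpath, ?_⟩
      intro hmem
      have h3' : 2 ≤ p.length := by simp at h3; omega
      rcases t with _ | ⟨z, t⟩
      · simp at h3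
      cases p with
      | nil => simp at h3'
      | cons h q =>
        rename_i w
        simp only [Walk.edges_cons, List.mem_cons] at hmem
        simp only [Walk.support_cons, List.cons_append, List.cons.injEq, true_and] at hp
        have hz : w = z := by
          have := q.head_support
          simp only [hp] at this
          simpa using this.symm
        have hyq : y ∉ q.support := by
          have := hpath.support_nodup
          simp at this
          exact this.1
        rcases hmem with hmem | hmem
        · have : z ≠ x := by
            rintro rfl
            simp at hn
          have h2 := hc.1.ne
          simp at hmem
          subst hz
          rcases hmem with h | h
          · exact h2 h.1
          · exact this h.symm
        · exact hyq (Walk.snd_mem_support_of_mem_edges q hmem)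
    · simp [hlen]

theorem cycL_of_walk {u : V} (c : G.Walk u u) (hc : c.IsCycle) :
    CycL G c.support.tail ∧ c.support.tail.length = c.length ∧
      ∀ x, x ∈ c.support.tail ↔ x ∈ c.support := by
  have h1 : c.support.tail.length = c.length := by simp
  refine ⟨⟨hc.support_nodup, by rw [h1]; exact hc.three_le_length, ?_⟩, h1, ?_⟩
  · have hne : c.support.tail ≠ [] := by
      intro h
      rw [h] at h1
      have := hc.three_le_length
      simp at h1; omega
    rw [Cycle.chain_ne_nil _ hne]
    have hch := c.isChain_adj_support
    have hs : c.support = u :: c.support.tail := (Walk.cons_tail_support c).symm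
    have hl : c.support.tail.getLast hne = u := by
      rw [List.getLast_tail]
      simp
    rw [hl, ← hs]
    exact hch
  · intro x
    constructor
    · exact List.mem_of_mem_tail
    · intro hx
      rw [← Walk.cons_tail_support c] at hx
      rcases List.mem_cons.1 hx with rfl | h
      · exact Walk.end_mem_tail_support (fun h => hc.not_nil h) 
      · exact h

theorem CycL.rot {l l' : List V} (h : CycL G l) (hr : l ~r l') : CycL G l' := by
  obtain ⟨a, b, c⟩ := h
  refine ⟨hr.perm.nodup_iff.1 a, hr.perm.length_eq ▸ b, ?_⟩
  have : (l : Cycle V) = (l' : Cycle V) := Cycle.coe_eq_coe.2 hr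
  rw [← this]; exact c

end LC

open SimpleGraph
namespace LC

variable {V : Type*} {G : SimpleGraph V}

theorem darts_chain {N D : Type*} (src tgt : D → N) (vx : N → V) (body : D → List V) (z : N) :
    ∀ (t : List D) (d : D),
    (d :: t).map tgt = t.map src ++ [z] →
    (∀ e ∈ d :: t, List.IsChain G.Adj (vx (src e) :: (body e ++ [vx (tgt e)]))) →
    List.IsChain G.Adj ((d :: t).flatMap (fun d => vx (src d) :: body d) ++ [vx z]) := by
  intro t
  induction t with
  | nil =>
    intro d h1 h2
    have := h2 d (by simp)
    simp at h1
    subst h1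
    simpa using this
  | cons e t ih =>
    intro d h1 h2
    simp only [List.map_cons, List.cons_append, List.cons.injEq] at h1
    have h3 := ih e (by simpa using h1.2) (fun x hx => h2 x (List.mem_cons_of_mem _ hx))
    have h4 := h2 d (by simp)
    rw [h1.1] at h4
    simp only [List.flatMap_cons, List.append_assoc, List.cons_append] at h3 ⊢
    have := List.isChain_split (R := G.Adj) (c := vx (src e)) (l₁ := vx (src d) :: body d)
      (l₂ := body e ++ (List.flatMap (fun d => vx (src d) :: body d) t ++ [vx z]))
    simp only [List.cons_append] at this
    rw [this]
    exact ⟨by simpa using h4, h3⟩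

theorem cyc_of_darts {N D : Type*} (src tgt : D → N) (vx : N → V) (body : D → List V) (ds : List D)
    (h3 : 3 ≤ ds.length)
    (hconn : ds.map tgt = (ds.map src).rotate 1)
    (hch : ∀ d ∈ ds, List.IsChain G.Adj (vx (src d) :: (body d ++ [vx (tgt d)])))
    (hsrc : (ds.map (fun d => vx (src d))).Nodup)
    (hb : ∀ d ∈ ds, (body d).Nodup)
    (hdis : ds.Pairwise (fun d d' => List.Disjoint (body d) (body d')))
    (hvb : ∀ d ∈ ds, ∀ d' ∈ ds, vx (src d) ∉ body d') :
    CycL G (ds.flatMap fun d => vx (src d) :: body d) := by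
  refine ⟨?_, ?_, ?_⟩
  · rw [List.nodup_flatMap]
    refine ⟨fun d hd => List.nodup_cons.2 ⟨hvb d hd d hd, hb d hd⟩, ?_⟩
    have h1 : ds.Pairwise (fun d d' => vx (src d) ≠ vx (src d')) := by
      simpa [List.Nodup, List.pairwise_map] using hsrc
    refine (List.Pairwise.and h1 hdis).imp_of_mem ?_
    rintro d d' hd hd' ⟨h, h'⟩ 
    simp only [Function.onFun]
    intro x hx hx'
    rcases List.mem_cons.1 hx with rfl | hx <;> rcases List.mem_cons.1 hx' with hx' | hx'
    · exact h hx'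
    · exact hvb _ hd _ hd' hx'
    · subst hx'; exact hvb _ hd' _ hd hx
    · exact h' hx hx'
  · refine h3.trans ?_
    rw [List.length_flatMap]
    have := List.length_le_sum_of_one_le (ds.map fun d => (vx (src d) :: body d).length) (by simp)
    simpa using this
  · rcases ds with _ | ⟨d, t⟩
    · simp at h3
    have := darts_chain src tgt vx body (src d) t d (by simpa using hconn) hch
    simp only [List.flatMap_cons, List.cons_append] at this ⊢
    rw [Cycle.chain_coe_cons]
    simpa using this

/-- abstract dart: `k = 0` arc of first cycle, `k = 1` arc of the second cycle, `k = 2` a path -/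
structure Dt where
  k : ℕ
  p : ℕ
  q : ℕ
  f : Bool

def Dt.s (d : Dt) : ℕ × ℕ :=
  match d.k with
  | 2 => bif d.f then (0, d.p) else (1, d.p)
  | _ => (d.k, bif d.f then d.p else d.q)

def Dt.t (d : Dt) : ℕ × ℕ :=
  match d.k with
  | 2 => bif d.f then (1, d.p) else (0, d.p)
  | _ => (d.k, bif d.f then d.q else d.p)

def Dt.arc (d : Dt) : ℕ × ℕ := (d.k, d.p)

def memB (x : ℕ) (l : List ℕ) : Bool := l.any (fun y => Nat.beq x y)
def peq (x y : ℕ × ℕ) : Bool := Nat.beq x.1 y.1 && Nat.beq x.2 y.2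
def memP (x : ℕ × ℕ) (l : List (ℕ × ℕ)) : Bool := l.any (fun y => peq x y)
def nodupP : List (ℕ × ℕ) → Bool
  | [] => true
  | x :: l => !(memP x l) && nodupP l
def eqP : List (ℕ × ℕ) → List (ℕ × ℕ) → Bool
  | [], [] => true
  | x :: l, y :: m => peq x y && eqP l m
  | _, _ => false

theorem memB_iff {x l} : memB x l = true ↔ x ∈ l := by
  simp [memB, List.any_eq_true]
theorem peq_iff {x y} : peq x y = true ↔ x = y := by
  simp [peq, Prod.ext_iff]
theorem memP_iff {x l} : memP x l = true ↔ x ∈ l := by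
  simp [memP, peq_iff]
theorem nodupP_iff {l} : nodupP l = true ↔ l.Nodup := by
  induction l with
  | nil => simp [nodupP]
  | cons x l ih => 
    have := @memP_iff x l
    simp [nodupP, ih, ← this]
theorem eqP_iff {l m} : eqP l m = true ↔ l = m := by
  induction l generalizing m with
  | nil => cases m <;> simp [eqP]
  | cons x l ih => cases m <;> simp [eqP, ih, peq_iff]

def rot1 {α : Type*} : List α → List α
  | [] => []
  | x :: l => l ++ [x]

def okD (σ τ J : List ℕ) (d : Dt) : Bool :=
  match d.k with
  | 0 => memP (d.p, d.q) (σ.zip (rot1 σ))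
  | 1 => memP (d.p, d.q) (τ.zip (rot1 τ)) && memB d.p J
  | 2 => memB d.p σ
  | _ => false

def chk (σ τ J : List ℕ) (ds : List Dt) : Bool :=
  Nat.ble 3 ds.length && ds.all (okD σ τ J) && nodupP (ds.map Dt.s) && nodupP (ds.map Dt.arc) &&
    eqP (ds.map Dt.t) (rot1 (ds.map Dt.s))

structure Model (G : SimpleGraph V) (l1 l2 : List V) (a b : ℕ → V) (mid g h : ℕ → List V)
    (σ τ I J : List ℕ) : Prop where
  c1 : CycL G l1
  c2 : CycL G l2
  r1 : l1 ~r σ.flatMap (fun p => a p :: g p)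
  r2 : l2 ~r τ.flatMap (fun p => b p :: h p)
  i1 : ∀ p ∈ I, ∀ x ∈ g p, x ∉ l2
  i2 : ∀ p ∈ J, ∀ x ∈ h p, x ∉ l1
  a2 : ∀ p ∈ σ, a p ∉ l2
  b1 : ∀ p ∈ τ, b p ∉ l1
  pc : ∀ p ∈ σ, List.IsChain G.Adj (a p :: (mid p ++ [b p]))
  pn : ∀ p ∈ σ, (mid p).Nodup
  p1 : ∀ p ∈ σ, ∀ x ∈ mid p, x ∉ l1 ∧ x ∉ l2
  pd : ∀ p ∈ σ, ∀ q ∈ σ, p ≠ q → List.Disjoint (mid p) (mid q)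
  st : ∀ p, p ∈ σ ↔ p ∈ τ
  sn : σ.Nodup
  tn : τ.Nodup

theorem Model.swap {l1 l2 : List V} {a b : ℕ → V} {mid g h : ℕ → List V}
    {σ τ I J : List ℕ} (M : Model G l1 l2 a b mid g h σ τ I J) :
    Model G l2 l1 b a (fun p => (mid p).reverse) h g τ σ J I where
  c1 := M.c2
  c2 := M.c1
  r1 := M.r2
  r2 := M.r1
  i1 := M.i2
  i2 := M.i1
  a2 := M.b1
  b1 := M.a2
  pc := by
    intro p hp
    have := M.pc p ((M.st p).2 hp)
    rw [← List.isChain_reverse] at this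
    simp only [List.reverse_cons, List.reverse_append, List.reverse_nil, List.nil_append,
      List.cons_append] at this
    exact this.imp (fun _ _ h => h.symm)
  pn := by
    intro p hp
    simpa using M.pn p ((M.st p).2 hp)
  p1 := by
    intro p hp x hx
    have := M.p1 p ((M.st p).2 hp) x (by simpa using hx)
    exact this.symm
  pd := by
    intro p hp q hq hpq
    have := M.pd p ((M.st p).2 hp) q ((M.st q).2 hq) hpq
    intro x hx hy
    exact this (by simpa using hx) (by simpa using hy)
  st := fun p => (M.st p).symm
  sn := M.tn
  tn := M.sn

theorem zip_chain {a : ℕ → V} {g : ℕ → List V} (z : ℕ) : ∀ (t : List ℕ) (x : ℕ),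
    List.IsChain G.Adj ((x :: t).flatMap (fun p => a p :: g p) ++ [a z]) →
    ∀ p q, (p, q) ∈ (x :: t).zip (t ++ [z]) → List.IsChain G.Adj (a p :: (g p ++ [a q])) := by
  intro t
  induction t with
  | nil =>
    intro x h p q hpq
    simp at hpq
    obtain ⟨rfl, rfl⟩ := hpq
    simpa using h
  | cons y t ih =>
    intro x h p q hpq
    have hs := List.isChain_split (R := G.Adj) (c := a y) (l₁ := a x :: g x)
      (l₂ := g y ++ (List.flatMap (fun p => a p :: g p) t ++ [a z]))
    simp only [List.flatMap_cons, List.append_assoc, List.cons_append] at h hs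
    rw [hs] at h
    simp only [List.cons_append, List.zip_cons_cons, List.mem_cons, Prod.mk.injEq] at hpq
    rcases hpq with ⟨rfl, rfl⟩ | hpq
    · simpa using h.1
    · exact ih y (by simpa using h.2) p q (by simpa using hpq)

theorem cyc_zip_chain {a : ℕ → V} {g : ℕ → List V} {σ : List ℕ} {l : List V} (hl : CycL G l)
    (hr : l ~r σ.flatMap (fun p => a p :: g p)) :
    ∀ p q, (p, q) ∈ σ.zip (rot1 σ) → List.IsChain G.Adj (a p :: (g p ++ [a q])) := by
  have h := (hl.rot hr).2.2
  rcases σ with _ | ⟨x, t⟩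
  · simp
  · refine zip_chain x t x ?_
    simp only [List.flatMap_cons, List.cons_append] at h
    rw [Cycle.chain_coe_cons] at h
    simpa using h

theorem seg_facts {a : ℕ → V} {g : ℕ → List V} {σ : List ℕ} {l : List V} (hl : CycL G l)
    (hr : l ~r σ.flatMap (fun p => a p :: g p)) :
    (∀ p ∈ σ, a p ∈ l ∧ (∀ x ∈ g p, x ∈ l) ∧ (g p).Nodup) ∧
    (∀ p ∈ σ, ∀ q ∈ σ, a p ∉ g q) ∧
    (∀ p ∈ σ, ∀ q ∈ σ, p ≠ q → a p ≠ a q ∧ List.Disjoint (g p) (g q)) := by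
  have h := (hl.rot hr).1
  rw [List.nodup_flatMap] at h
  obtain ⟨h1, h2⟩ := h
  have h3 : ∀ p ∈ σ, ∀ q ∈ σ, p ≠ q → List.Disjoint (a p :: g p) (a q :: g q) := by
    intro p hp q hq hpq
    have hs : Std.Symm (fun p q => List.Disjoint (a p :: g p) (a q :: g q)) :=
      ⟨fun _ _ h => h.symm⟩
    exact List.Pairwise.forall (R := fun p q => List.Disjoint (a p :: g p) (a q :: g q))
      h2 hp hq hpq
  have hmem : ∀ p ∈ σ, ∀ x ∈ a p :: g p, x ∈ l := by
    intro p hp x hx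
    rw [hr.perm.mem_iff, List.mem_flatMap]
    exact ⟨p, hp, hx⟩
  refine ⟨fun p hp => ⟨hmem p hp _ (by simp), fun x hx => hmem p hp x (by simp [hx]),
    (List.nodup_cons.1 (h1 p hp)).2⟩, ?_, ?_⟩
  · intro p hp q hq hx
    by_cases hpq : p = q
    · subst hpq
      exact (List.nodup_cons.1 (h1 p hp)).1 hx
    · exact h3 p hp q hq hpq (by simp) (List.mem_cons_of_mem _ hx)
  · intro p hp q hq hpq
    refine ⟨fun he => h3 p hp q hq hpq (List.mem_cons_self) (by rw [he]; simp), ?_⟩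
    intro x hx hy
    exact h3 p hp q hq hpq (List.mem_cons_of_mem _ hx) (List.mem_cons_of_mem _ hy)

def bodyD (mid g h : ℕ → List V) (d : Dt) : List V :=
  let w := match d.k with
    | 0 => g d.p
    | 1 => h d.p
    | _ => mid d.p
  bif d.f then w else w.reverse

def wt (mid g h : ℕ → List V) (e : ℕ × ℕ) : ℕ :=
  match e.1 with
    | 0 => 1 + (g e.2).length
    | 1 => 1 + (h e.2).length
    | _ => 1 + (mid e.2).length

def vxD (a b : ℕ → V) (n : ℕ × ℕ) : V :=
  match n.1 with
  | 0 => a n.2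
  | _ => b n.2

theorem length_bodyD (mid g h : ℕ → List V) (d : Dt) :
    1 + (bodyD mid g h d).length = wt mid g h d.arc := by
  rcases d with ⟨k, p, q, f⟩
  rcases k with _ | _ | k <;> cases f <;> simp [bodyD, wt, Dt.arc]

theorem mem_zip_rot {σ : List ℕ} {p q : ℕ} (h : (p, q) ∈ σ.zip (rot1 σ)) : p ∈ σ ∧ q ∈ σ := by
  have := List.of_mem_zip h
  refine ⟨this.1, ?_⟩
  rcases σ with _ | ⟨x, t⟩
  · simp [rot1] at h
  · have := this.2
    simp [rot1] at this
    simp; tauto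

theorem rot1_eq {α : Type*} (l : List α) : rot1 l = l.rotate 1 := by
  cases l <;> simp [rot1]

theorem rev_chain {x y : V} {l : List V} (h : List.IsChain G.Adj (x :: (l ++ [y]))) :
    List.IsChain G.Adj (y :: (l.reverse ++ [x])) := by
  rw [← List.isChain_reverse] at h
  simp only [List.reverse_cons, List.reverse_append, List.reverse_nil, List.nil_append,
      List.cons_append] at h
  exact h.imp (fun _ _ h => h.symm)

theorem Model.sound {l1 l2 : List V} {a b : ℕ → V} {mid g h : ℕ → List V}
    {σ τ I J : List ℕ} (M : Model G l1 l2 a b mid g h σ τ I J)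
    {ds : List Dt} (hc : chk σ τ J ds = true) :
    ∃ l, CycL G l ∧ l.length = ((ds.map Dt.arc).map (wt mid g h)).sum := by
  simp only [chk, Bool.and_eq_true, nodupP_iff, eqP_iff, List.all_eq_true, Nat.ble_eq] at hc
  obtain ⟨⟨⟨⟨h3, hok⟩, hns⟩, hna⟩, hcon⟩ := hc
  obtain ⟨A1, A2, A3⟩ := seg_facts M.c1 M.r1
  obtain ⟨B1, B2, B3⟩ := seg_facts M.c2 M.r2
  have hZ1 := cyc_zip_chain M.c1 M.r1
  have hZ2 := cyc_zip_chain M.c2 M.r2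
  -- facts per dart
  have hd : ∀ d ∈ ds, (d.k = 0 ∧ (d.p, d.q) ∈ σ.zip (rot1 σ)) ∨
      (d.k = 1 ∧ (d.p, d.q) ∈ τ.zip (rot1 τ) ∧ d.p ∈ J) ∨ (d.k = 2 ∧ d.p ∈ σ) := by
    intro d hd
    have := hok d hd
    rcases d with ⟨k, p, q, f⟩
    rcases k with _ | _ | _ | k <;> simp [okD, memP_iff, memB_iff] at this ⊢ <;> assumption
  have hsrc : ∀ d ∈ ds, (d.s.1 = 0 ∧ d.s.2 ∈ σ) ∨ (d.s.1 = 1 ∧ d.s.2 ∈ τ) := by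
    intro d hdm
    have := hd d hdm
    rcases d with ⟨k, p, q, f⟩
    simp only at this
    rcases this with ⟨rfl, h⟩ | ⟨rfl, h, _⟩ | ⟨rfl, h⟩
    · have := mem_zip_rot h
      cases f <;> simp [Dt.s, this]
    · have := mem_zip_rot h
      cases f <;> simp [Dt.s, this]
    · have := (M.st p).1 h
      cases f <;> simp [Dt.s, this, h]
  have hbody : ∀ d ∈ ds, ∀ x ∈ bodyD mid g h d, 
      (d.k = 0 ∧ d.p ∈ σ ∧ x ∈ g d.p ∧ x ∈ l1) ∨ (d.k = 1 ∧ d.p ∈ τ ∧ x ∈ h d.p ∧ x ∈ l2 ∧ x ∉ l1) ∨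
      (d.k = 2 ∧ d.p ∈ σ ∧ x ∈ mid d.p ∧ x ∉ l1 ∧ x ∉ l2) := by
    intro d hdm x hx
    have := hd d hdm
    rcases d with ⟨k, p, q, f⟩
    simp only at this
    rcases this with ⟨rfl, hh⟩ | ⟨rfl, hh, hj⟩ | ⟨rfl, hh⟩
    · have h1 := mem_zip_rot hh
      have hx' : x ∈ g p := by cases f <;> simpa [bodyD] using hx
      exact Or.inl ⟨rfl, h1.1, hx', (A1 p h1.1).2.1 x hx'⟩
    · have h1 := mem_zip_rot hh
      have hx' : x ∈ h p := by cases f <;> simpa [bodyD] using hx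
      exact Or.inr (Or.inl ⟨rfl, h1.1, hx', (B1 p h1.1).2.1 x hx', M.i2 p hj x hx'⟩)
    · have hx' : x ∈ mid p := by cases f <;> simpa [bodyD] using hx
      exact Or.inr (Or.inr ⟨rfl, hh, hx', M.p1 p hh x hx'⟩)
  refine ⟨ds.flatMap fun d => vxD a b (Dt.s d) :: bodyD mid g h d, 
    cyc_of_darts Dt.s Dt.t (vxD a b) (bodyD mid g h) ds h3 (by rw [hcon, rot1_eq]) ?_ ?_ ?_ ?_ ?_, ?_⟩
  · intro d hdm
    have := hd d hdm
    rcases d with ⟨k, p, q, f⟩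
    simp only at this
    rcases this with ⟨rfl, hh⟩ | ⟨rfl, hh, hj⟩ | ⟨rfl, hh⟩
    · have := hZ1 p q hh
      cases f
      · exact rev_chain this
      · exact this
    · have := hZ2 p q hh
      cases f
      · exact rev_chain this
      · exact this
    · have := M.pc p hh
      cases f
      · exact rev_chain this
      · exact this
  · have h1 : ds.Pairwise (fun d d' => d.s ≠ d'.s) := by
      simpa [List.Nodup, List.pairwise_map] using hns
    rw [List.Nodup, List.pairwise_map]
    refine h1.imp_of_mem ?_
    intro d d' hdm hdm' hne he
    have e1 := hsrc d hdm
    have e2 := hsrc d' hdm'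
    generalize d.s = s at *
    generalize d'.s = s' at *
    rcases s with ⟨i, p⟩
    rcases s' with ⟨i', p'⟩
    simp only at e1 e2
    rcases e1 with ⟨rfl, e1⟩ | ⟨rfl, e1⟩ <;> rcases e2 with ⟨rfl, e2⟩ | ⟨rfl, e2⟩ <;>
      simp only [vxD] at he
    · exact (A3 p e1 p' e2 (by rintro rfl; exact hne rfl)).1 he
    · exact M.b1 p' e2 (he ▸ (A1 p e1).1)
    · exact M.b1 p e1 (he ▸ (A1 p' e2).1)
    · exact (B3 p e1 p' e2 (by rintro rfl; exact hne rfl)).1 he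
  · intro d hdm
    have := hd d hdm
    rcases d with ⟨k, p, q, f⟩
    simp only at this
    rcases this with ⟨rfl, hh⟩ | ⟨rfl, hh, hj⟩ | ⟨rfl, hh⟩
    · have := (A1 p (mem_zip_rot hh).1).2.2
      cases f <;> simpa [bodyD] using this
    · have := (B1 p (mem_zip_rot hh).1).2.2
      cases f <;> simpa [bodyD] using this
    · have := M.pn p hh
      cases f <;> simpa [bodyD] using this
  · have h1 : ds.Pairwise (fun d d' => d.arc ≠ d'.arc) := by
      simpa [List.Nodup, List.pairwise_map] using hna
    refine h1.imp_of_mem ?_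
    intro d d' hdm hdm' hne x hx hx'
    have e1 := hbody d hdm x hx
    have e2 := hbody d' hdm' x hx'
    have hpp : d.k = d'.k → d.p ≠ d'.p := by
      intro hk hp
      exact hne (by simp [Dt.arc, hk, hp])
    rcases e1 with ⟨k1, e1, e3, e4⟩ | ⟨k1, e1, e3, e4, e5⟩ | ⟨k1, e1, e3, e4, e5⟩ <;> 
    rcases e2 with ⟨k2, f1, f3, f4⟩ | ⟨k2, f1, f3, f4, f5⟩ | ⟨k2, f1, f3, f4, f5⟩ <;> try tauto
    · exact (A3 _ e1 _ f1 (hpp (k1.trans k2.symm))).2 e3 f3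
    · exact (B3 _ e1 _ f1 (hpp (k1.trans k2.symm))).2 e3 f3
    · exact (M.pd _ e1 _ f1 (hpp (k1.trans k2.symm))) e3 f3
  · intro d hdm d' hdm' hx
    have e1 := hsrc d hdm
    have e2 := hbody d' hdm' _ hx
    generalize d.s = s at *
    rcases s with ⟨i, p⟩
    simp only at e1
    rcases e1 with ⟨rfl, e1⟩ | ⟨rfl, e1⟩ <;> simp only [vxD] at e2
    · have := (A1 p e1).1
      rcases e2 with ⟨k2, f1, f3, f4⟩ | ⟨k2, f1, f3, f4, f5⟩ | ⟨k2, f1, f3, f4, f5⟩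
      · exact A2 p e1 _ f1 f3
      · exact f5 this
      · exact f4 this
    · have h1 := M.b1 p e1
      rcases e2 with ⟨k2, f1, f3, f4⟩ | ⟨k2, f1, f3, f4, f5⟩ | ⟨k2, f1, f3, f4, f5⟩
      · exact h1 f4
      · exact B2 p e1 _ f1 f3
      · exact f5 (B1 p e1).1
  · rw [List.length_flatMap, List.map_map]
    congr 1
    apply List.map_congr_left
    intro d _
    simp [← length_bodyD, Nat.add_comm]

end LC

open SimpleGraph
namespace LC

variable {V : Type*} {G : SimpleGraph V}

def flipE (e : ℕ × ℕ) : ℕ × ℕ :=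
  match e.1 with
  | 0 => (1, e.2)
  | 1 => (0, e.2)
  | _ => e

def fullchk (σ τ I J : List ℕ) (D1 D2 : List Dt) : Bool :=
  let M := D1.map Dt.arc ++ (D2.map Dt.arc).map flipE
  chk σ τ J D1 && chk τ σ I D2 && σ.all (fun p => memP (0, p) M) && τ.all (fun p => memP (1, p) M)
    && M.any (fun e => Nat.beq e.1 2)

theorem wt_flip (mid g h : ℕ → List V) (e : ℕ × ℕ) :
    wt (fun p => (mid p).reverse) h g e = wt mid g h (flipE e) := by
  rcases e with ⟨k, p⟩
  rcases k with _ | _ | k <;> simp [wt, flipE]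

theorem Model.contra {l1 l2 : List V} {a b : ℕ → V} {mid g h : ℕ → List V}
    {σ τ I J : List ℕ} (M : Model G l1 l2 a b mid g h σ τ I J) 
    {L : ℕ} (h1 : l1.length = L) (h2 : l2.length = L) (hL : ∀ l, CycL G l → l.length ≤ L)
    {D1 D2 : List Dt} (hc : fullchk σ τ I J D1 D2 = true) : False := by
  simp only [fullchk, Bool.and_eq_true, List.all_eq_true, memP_iff, List.any_eq_true,
    Nat.beq_eq] at hc
  obtain ⟨⟨⟨⟨hc1, hc2⟩, hs⟩, ht⟩, e, he, he2⟩ := hc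
  obtain ⟨m1, hm1, e1⟩ := M.sound hc1
  obtain ⟨m2, hm2, e2⟩ := M.swap.sound hc2
  have f1 := hL _ hm1
  have f2 := hL _ hm2
  set W := wt mid g h
  have e2' : m2.length = (((D2.map Dt.arc).map flipE).map W).sum := by
    rw [e2]
    simp only [List.map_map]
    congr 1
    apply List.map_congr_left
    intro x _
    exact wt_flip mid g h _
  set N : List (ℕ × ℕ) := e :: (σ.map (fun p => (0, p)) ++ τ.map (fun p => (1, p))) with hN
  have hnd : N.Nodup := by
    rw [hN, List.nodup_cons]
    refine ⟨?_, ?_⟩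
    · simp only [List.mem_append, List.mem_map, not_or, not_exists, not_and]
      refine ⟨fun x _ h => ?_, fun x _ h => ?_⟩ <;> (subst h; simp at he2)
    · rw [List.nodup_append]
      refine ⟨M.sn.map (fun x y h => by simpa using h), M.tn.map (fun x y h => by simpa using h), ?_⟩
      intro x hx y hy
      simp only [List.mem_map] at hx hy
      obtain ⟨_, _, rfl⟩ := hx
      obtain ⟨_, _, rfl⟩ := hy
      simp
  have hsub : N ⊆ D1.map Dt.arc ++ (D2.map Dt.arc).map flipE := by
    intro x hx
    rw [hN, List.mem_cons, List.mem_append, List.mem_map, List.mem_map] at hx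
    rcases hx with rfl | ⟨p, hp, rfl⟩ | ⟨p, hp, rfl⟩
    · exact he
    · exact hs p hp
    · exact ht p hp
  have hsp := List.subperm_of_subset hnd hsub
  have hle : (N.map W).sum ≤ ((D1.map Dt.arc ++ (D2.map Dt.arc).map flipE).map W).sum := by
    obtain ⟨l', hp, hl'⟩ := hsp
    rw [← (hp.map W).sum_eq]
    exact (hl'.map W).sum_le_sum (by simp)
  rw [List.map_append, List.sum_append, ← e1, ← e2', hN, List.map_cons, List.sum_cons,
    List.map_append, List.sum_append, List.map_map, List.map_map] at hle
  have g1 : l1.length = (σ.map (W ∘ fun p => (0, p))).sum := by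
    rw [M.r1.perm.length_eq, List.length_flatMap]
    congr 1
    apply List.map_congr_left
    intro x _
    simp [W, wt, Nat.add_comm]
  have g2 : l2.length = (τ.map (W ∘ fun p => (1, p))).sum := by
    rw [M.r2.perm.length_eq, List.length_flatMap]
    congr 1
    apply List.map_congr_left
    intro x _
    simp [W, wt, Nat.add_comm]
  have hW : 1 ≤ W e := by
    rcases e with ⟨k, p⟩
    simp only at he2
    subst he2
    simp [W, wt]
  omega

/-! tracing -/

/-- find an unused arc at node `x` -/
def step (arcs : List Dt) (x : ℕ × ℕ) : List Dt → Option (Dt × List Dt)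
  | [] => none
  | d :: r =>
    bif peq d.s x then some (d, r)
    else bif peq d.t x then some (⟨d.k, d.p, d.q, !d.f⟩, r)
    else match step arcs x r with
      | none => none
      | some (e, r') => some (e, d :: r')

def trace : ℕ → ℕ × ℕ → List Dt → List Dt
  | 0, _, _ => []
  | n+1, x, l => match step l x l with
    | none => []
    | some (d, r) => d :: trace n d.t r

def deg (x : ℕ × ℕ) (l : List Dt) : ℕ := l.countP (fun d => peq d.s x || peq d.t x)

/-- build the dart cycle: all outer arcs of `σ`, arcs of `σ` in `X`, and arcs of `τ` in `Y` -/
def mk (σ τ I X Y : List ℕ) : List Dt :=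
  let A := ((σ.zip (rot1 σ)).filter (fun e => !(memB e.1 I) || memB e.1 X)).map
    (fun e => (⟨0, e.1, e.2, true⟩ : Dt))
  let B := ((τ.zip (rot1 τ)).filter (fun e => memB e.1 Y)).map
    (fun e => (⟨1, e.1, e.2, true⟩ : Dt))
  let R := A ++ B
  let P := (σ.filter (fun p => Nat.beq (deg (0, p) R) 1)).map (fun p => (⟨2, p, p, true⟩ : Dt))
  let T := R ++ P
  match T with
  | [] => []
  | d :: _ => trace T.length d.s T

/-- `X ⊆ I`, `Y ⊆ J` as sets of arcs -/
def cert (σ τ I J X Y : List ℕ) : Bool :=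
  fullchk σ τ I J (mk σ τ I X Y)
    (mk τ σ J (J.filter (fun p => !(memB p Y))) (I.filter (fun p => !(memB p X))))

theorem cert_double1 : cert [0,1] [0,1] [0] [0] [] [0] = true := by decide +kernel
theorem cert_double2 : cert [0,1] [1,0] [0] [1] [] [1] = true := by decide +kernel
theorem cert_c4 : cert [0,1,2,3] [0,2,1,3] [0,2] [0,1] [] [0,1] = true := by decide +kernel

def rho (n : ℕ) : ℕ :=
  bif Nat.ble n 3 then n + 4 else bif Nat.ble n 7 then n - 4 else n

/-- the eight cyclic orders -/
def ms (o f s : Bool) : List ℕ :=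
  let a := bif o then [0, 1] else [1, 0]
  let b := bif o then [3, 2] else [2, 3]
  let c := bif s then [4, 8, 6, 5, 9, 7] else [5, 9, 7, 4, 8, 6]
  bif f then a ++ b ++ c else a ++ c ++ b

def mi (o : Bool) : List ℕ := (bif o then [0, 3] else [1, 2]) ++ [4, 8, 5, 9]

def mx (o u w : Bool) : List ℕ :=
  (bif u then (bif o then 0 else 1) else (bif o then 3 else 2)) :: bif w then [4, 5] else [8, 9]

def mainB (o f s o' f' s' : Bool) (u w u' w' : Bool) : Bool :=
  cert (ms o f s) ((ms o' f' s').map rho) (mi o) ((mi o').map rho) (mx o u w)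
    ((mx o' u' w').map rho)

def mainAny (o f s o' f' s' : Bool) : Bool :=
  mainB o f s o' f' s' true true false false ||
  mainB o f s o' f' s' true false true false ||
  mainB o f s o' f' s' false true false true ||
  mainB o f s o' f' s' false false true true

theorem mainAny_all : ∀ o f s o' f' s' : Bool, mainAny o f s o' f' s' = true := by
  decide +kernel

theorem main_cert (o f s o' f' s' : Bool) : ∃ X Y, 
    cert (ms o f s) ((ms o' f' s').map rho) (mi o) ((mi o').map rho) X Y = true := by
  have := mainAny_all o f s o' f' s'
  simp only [mainAny, Bool.or_eq_true] at this
  rcases this with ((h | h) | h) | h <;> exact ⟨_, _, h⟩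

end LC

open SimpleGraph
namespace LC

variable {V : Type*} {G : SimpleGraph V}

def Side (l l' : List V) (a : ℕ → V) (σ I : List ℕ) : Prop :=
  ∃ g : ℕ → List V, l ~r σ.flatMap (fun p => a p :: g p) ∧ ∀ p ∈ I, ∀ x ∈ g p, x ∉ l'

structure Sys (G : SimpleGraph V) (l1 l2 : List V) (L : ℕ) {ι : Type*} (a b : ι → V)
    (mid : ι → List V) : Prop where
  c1 : CycL G l1
  c2 : CycL G l2
  len1 : l1.length = L
  len2 : l2.length = L
  mx : ∀ l, CycL G l → l.length ≤ L
  a1 : ∀ i, a i ∈ l1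
  a2 : ∀ i, a i ∉ l2
  b2 : ∀ i, b i ∈ l2
  b1 : ∀ i, b i ∉ l1
  pc : ∀ i, List.IsChain G.Adj (a i :: (mid i ++ [b i]))
  pn : ∀ i, (mid i).Nodup
  p1 : ∀ i, ∀ x ∈ mid i, x ∉ l1 ∧ x ∉ l2
  pd : ∀ i j, i ≠ j → List.Disjoint (mid i) (mid j)
  ai : Function.Injective a
  bi : Function.Injective b

theorem Sys.swap {l1 l2 : List V} {L : ℕ} {ι : Type*} {a b : ι → V}
    {mid : ι → List V} (S : Sys G l1 l2 L a b mid) :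
    Sys G l2 l1 L b a (fun i => (mid i).reverse) where
  c1 := S.c2
  c2 := S.c1
  len1 := S.len2
  len2 := S.len1
  mx := S.mx
  a1 := S.b2
  a2 := S.b1
  b2 := S.a1
  b1 := S.a2
  pc := fun i => rev_chain (S.pc i)
  pn := fun i => by simpa using S.pn i
  p1 := fun i x hx => (S.p1 i x (by simpa using hx)).symm
  pd := fun i j hij x hx hy => S.pd i j hij (by simpa using hx) (by simpa using hy)
  ai := S.bi
  bi := S.ai

theorem Sys.contra {l1 l2 : List V} {L : ℕ} {ι : Type*} {a b : ι → V}
    {mid : ι → List V} (S : Sys G l1 l2 L a b mid) (e : ℕ → ι) {σ τ I J X Y : List ℕ}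
    (hc : cert σ τ I J X Y = true) (sn : σ.Nodup) (hp : σ.Perm τ)
    (s1 : Side l1 l2 (fun p => a (e p)) σ I) (s2 : Side l2 l1 (fun p => b (e p)) τ J) : False := by
  obtain ⟨g, hg1, hg2⟩ := s1
  obtain ⟨h, hh1, hh2⟩ := s2
  have he : ∀ p ∈ σ, ∀ q ∈ σ, p ≠ q → e p ≠ e q := by
    intro p hp q hq hpq h
    exact ((seg_facts S.c1 hg1).2.2 p hp q hq hpq).1 (by simp [h])
  have M : Model G l1 l2 (fun p => a (e p)) (fun p => b (e p)) (fun p => mid (e p)) g h σ τ I J :=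
    { c1 := S.c1
      c2 := S.c2
      r1 := hg1
      r2 := hh1
      i1 := hg2
      i2 := hh2
      a2 := fun p _ => S.a2 _
      b1 := fun p _ => S.b1 _
      pc := fun p _ => S.pc _
      pn := fun p _ => S.pn _
      p1 := fun p _ => S.p1 _
      pd := fun p hp q hq hpq => S.pd _ _ (he p hp q hq hpq)
      st := fun p => hp.mem_iff
      sn := sn
      tn := hp.nodup_iff.1 sn }
  exact M.contra S.len1 S.len2 S.mx hc

theorem flatMap_rot {f : ℕ → List V} {σ τ : List ℕ} (h : σ ~r τ) : σ.flatMap f ~r τ.flatMap f := by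
  obtain ⟨n, rfl⟩ := h
  rw [List.rotate_eq_drop_append_take_mod]
  conv_lhs => rw [← List.take_append_drop (n % σ.length) σ]
  rw [List.flatMap_append, List.flatMap_append]
  exact List.isRotated_append

theorem Side.rot {l l' : List V} {a : ℕ → V} {σ τ I : List ℕ} (h : Side l l' a σ I) (hr : σ ~r τ) :
    Side l l' a τ I := by
  obtain ⟨g, h1, h2⟩ := h
  exact ⟨g, h1.trans (flatMap_rot hr), h2⟩

theorem rho_rho (n : ℕ) : rho (rho n) = n := by
  by_cases h1 : n ≤ 3
  · have : rho n = n + 4 := by simp [rho, Nat.ble_eq_true_of_le h1]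
    rw [this]
    have h2 : Nat.ble (n+4) 3 = false := by simp [Bool.eq_false_iff, Nat.ble_eq]
    have h3 : Nat.ble (n+4) 7 = true := by simp [Nat.ble_eq]; omega
    simp [rho, h2, h3]
  · have h1' : Nat.ble n 3 = false := by rw [Bool.eq_false_iff, Ne, Nat.ble_eq]; omega
    by_cases h2 : n ≤ 7
    · have : rho n = n - 4 := by simp [rho, h1', Nat.ble_eq_true_of_le h2]
      rw [this]
      have h3 : Nat.ble (n-4) 3 = true := by rw [Nat.ble_eq]; omega
      simp [rho, h3]; omega
    · have h2' : Nat.ble n 7 = false := by rw [Bool.eq_false_iff, Ne, Nat.ble_eq]; omega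
      have : rho n = n := by simp [rho, h1', h2']
      rw [this, this]

theorem Side.rho {l l' : List V} {a : ℕ → V} {σ I : List ℕ} (h : Side l l' (fun p => a (rho p)) σ I) :
    Side l l' a (σ.map rho) (I.map rho) := by
  obtain ⟨g, h1, h2⟩ := h
  refine ⟨fun p => g (LC.rho p), ?_, ?_⟩
  · simpa [List.flatMap_map, rho_rho] using h1
  · intro p hp x hx
    obtain ⟨q, hq, rfl⟩ := List.mem_map.1 hp
    simp only [rho_rho] at hx
    exact h2 q hq x hx

variable [DecidableEq V]

theorem idxOf_take {l : List V} {n : ℕ} {y : V} (h : y ∈ l.take n) : l.idxOf y < n := by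
  have h1 := List.idxOf_lt_length_of_mem h
  have h2 : l.idxOf y = (l.take n).idxOf y := by
    conv_lhs => rw [← List.take_append_drop n l]
    rw [List.idxOf_append_of_mem h]
  rw [h2]
  simp at h1
  omega

theorem idxOf_drop {l : List V} (hl : l.Nodup) {n : ℕ} {y : V} (h : y ∈ l.drop n) : n ≤ l.idxOf y := by
  by_contra hlt
  push Not at hlt
  have hy : y ∈ l := List.mem_of_mem_drop h
  have h2 : y ∈ l.take n := by
    rw [List.mem_take_iff_getElem]
    exact ⟨l.idxOf y, by simp [List.idxOf_lt_length_of_mem hy, hlt], by simp⟩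
  rw [← List.take_append_drop n l, List.nodup_append] at hl
  exact hl.2.2 y h2 y h rfl

theorem dec {l : List V} (hl : l.Nodup) (a : ℕ → V) (pre : List V) : ∀ (t : List ℕ) (x : ℕ), 
    (∀ p ∈ x :: t, a p ∈ l) → (x :: t).Pairwise (fun p q => l.idxOf (a p) < l.idxOf (a q)) →
    ∃ g : ℕ → List V, l.drop (l.idxOf (a x)) ++ pre = (x :: t).flatMap (fun p => a p :: g p) ∧
      ∀ p q, (p, q) ∈ (x :: t).zip t → ∀ y ∈ g p, l.idxOf (a p) < l.idxOf y ∧ 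
        l.idxOf y < l.idxOf (a q) := by
  intro t
  induction t with
  | nil =>
    intro x hx hp
    have h0 := List.idxOf_lt_length_of_mem (hx x (by simp))
    refine ⟨fun _ => l.drop (l.idxOf (a x) + 1) ++ pre, ?_, by simp⟩
    rw [List.drop_eq_getElem_cons h0]
    simp
  | cons z t ih =>
    intro x hx hp
    rw [List.pairwise_cons] at hp
    obtain ⟨g, hg, hg2⟩ := ih z (fun p hp => hx p (List.mem_cons_of_mem _ hp)) hp.2
    have h0 := List.idxOf_lt_length_of_mem (hx x (by simp))
    have hxz := hp.1 z (by simp)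
    have hxt : x ∉ z :: t := fun hm => lt_irrefl _ (hp.1 x hm)
    set w := (l.drop (l.idxOf (a x) + 1)).take (l.idxOf (a z) - (l.idxOf (a x) + 1)) with hw
    refine ⟨Function.update g x w, ?_, ?_⟩
    · rw [List.flatMap_cons, Function.update_self]
      have : (z :: t).flatMap (fun p => a p :: Function.update g x w p) = 
          (z :: t).flatMap (fun p => a p :: g p) := by
        refine List.flatMap_congr ?_
        intro p hpm
        rw [Function.update_of_ne]
        rintro rfl; exact hxt hpm
      rw [this, ← hg, List.drop_eq_getElem_cons h0]
      have h3 : l.drop (l.idxOf (a z)) = (l.drop (l.idxOf (a x) + 1)).drop 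
          (l.idxOf (a z) - (l.idxOf (a x) + 1)) := by
        rw [List.drop_drop]; congr 1; omega
      rw [h3, hw]
      simp only [List.getElem_idxOf, List.cons_append]
      rw [← List.append_assoc, List.take_append_drop]
    · intro p q hpq y hy
      rw [List.zip_cons_cons, List.mem_cons] at hpq
      rcases hpq with hpq | hpq
      · obtain ⟨rfl, rfl⟩ := Prod.mk.inj hpq
        rw [Function.update_self] at hy
        refine ⟨?_, ?_⟩
        · have := idxOf_drop hl (List.mem_of_mem_take hy)
          omega
        · rw [hw, List.take_drop] at hy
          have := idxOf_take (List.mem_of_mem_drop hy)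
          omega
      · have hpm := (List.of_mem_zip hpq).1
        rw [Function.update_of_ne (by rintro rfl; exact hxt hpm)] at hy
        exact hg2 p q hpq y hy

def pos (l : List V) (v : V) : ℕ := l.idxOf v
def seg (l l' : List V) (v : V) : ℕ := (l.take (l.idxOf v)).countP (fun x => decide (x ∈ l'))

theorem pos_lt_of_seg {l l' : List V} {v w : V} (h : seg l l' v < seg l l' w) : pos l v < pos l w := by
  by_contra hh
  push Not at hh
  have : l.take (l.idxOf w) <+: l.take (l.idxOf v) := List.take_prefix_take_left hh
  have := this.sublist.countP_le (p := fun x => decide (x ∈ l'))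
  unfold seg at h
  omega

theorem not_mem_of_seg {l l' : List V} {v w y : V} (hy : y ∈ l) (h : seg l l' v = seg l l' w)
    (h1 : l.idxOf v < l.idxOf y) (h2 : l.idxOf y < l.idxOf w) : y ∉ l' := by
  intro hy'
  have hlt := List.idxOf_lt_length_of_mem hy
  have e1 : l.take (l.idxOf y + 1) <+: l.take (l.idxOf w) := List.take_prefix_take_left (by omega)
  have e2 : l.take (l.idxOf v) <+: l.take (l.idxOf y) := List.take_prefix_take_left (by omega)
  have f1 := e1.sublist.countP_le (p := fun x => decide (x ∈ l'))
  have f2 := e2.sublist.countP_le (p := fun x => decide (x ∈ l'))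
  rw [List.take_succ_eq_append_getElem hlt, List.countP_append] at f1
  simp [hy'] at f1
  unfold seg at h
  omega

theorem seg_le {l l' : List V} (v : V) : seg l l' v ≤ l.countP (fun x => decide (x ∈ l')) :=
  (List.take_sublist _ _).countP_le

theorem side_of_sorted {l l' : List V} (hl : l.Nodup) (a : ℕ → V) {T S I : List ℕ} (nx : ℕ → ℕ)
    (hT : T ≠ []) (ha : ∀ p ∈ T, a p ∈ l) (hs : T.Pairwise (fun p q => pos l (a p) < pos l (a q)))
    (hr : T ~r S) (hI : ∀ p ∈ I, (p, nx p) ∈ T.zip T.tail ∧ seg l l' (a p) = seg l l' (a (nx p))) :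
    Side l l' a S I := by
  refine Side.rot ?_ hr
  rcases T with _ | ⟨x, t⟩
  · exact absurd rfl hT
  obtain ⟨g, h1, h2⟩ := dec hl a (l.take (l.idxOf (a x))) t x ha hs
  have hr1 : l ~r (x :: t).flatMap (fun p => a p :: g p) := by
    rw [← h1]
    conv_lhs => rw [← List.take_append_drop (l.idxOf (a x)) l]
    exact List.isRotated_append
  refine ⟨g, hr1, ?_⟩
  intro p hp y hy
  obtain ⟨h3, h4⟩ := hI p hp
  have h5 := h2 p (nx p) h3 y hy
  refine not_mem_of_seg ?_ h4 h5.1 h5.2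
  rw [hr1.perm.mem_iff, List.mem_flatMap]
  exact ⟨p, (List.of_mem_zip h3).1, List.mem_cons_of_mem _ hy⟩

end LC

open SimpleGraph
namespace LC

def nxt (_o : Bool) (n : ℕ) : ℕ :=
  match n with
  | 4 => 8
  | 8 => 6
  | 5 => 9
  | 9 => 7
  | 0 => 1
  | 1 => 0
  | 2 => 3
  | _ => 2

theorem order16 (s : ℕ → ℕ) (d1 : s 0 ≠ s 2) (d2 : s 0 ≠ s 8) (d3 : s 0 ≠ s 9) (d4 : s 2 ≠ s 8)
    (d5 : s 2 ≠ s 9) (d6 : s 8 ≠ s 9)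
    (hn : ((s 0 < s 8 ∧ s 8 < s 2) ∨ (s 2 < s 8 ∧ s 8 < s 0)) ↔
      ((s 0 < s 9 ∧ s 9 < s 2) ∨ (s 2 < s 9 ∧ s 9 < s 0))) :
      (s 0 < s 2 ∧ s 2 < s 8 ∧ s 8 < s 9) ∨
      (s 0 < s 2 ∧ s 2 < s 9 ∧ s 9 < s 8) ∨
      (s 0 < s 8 ∧ s 8 < s 9 ∧ s 9 < s 2) ∨
      (s 0 < s 9 ∧ s 9 < s 8 ∧ s 8 < s 2) ∨
      (s 2 < s 0 ∧ s 0 < s 8 ∧ s 8 < s 9) ∨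
      (s 2 < s 0 ∧ s 0 < s 9 ∧ s 9 < s 8) ∨
      (s 2 < s 8 ∧ s 8 < s 9 ∧ s 9 < s 0) ∨
      (s 2 < s 9 ∧ s 9 < s 8 ∧ s 8 < s 0) ∨
      (s 8 < s 0 ∧ s 0 < s 2 ∧ s 2 < s 9) ∨
      (s 8 < s 2 ∧ s 2 < s 0 ∧ s 0 < s 9) ∨
      (s 8 < s 9 ∧ s 9 < s 0 ∧ s 0 < s 2) ∨
      (s 8 < s 9 ∧ s 9 < s 2 ∧ s 2 < s 0) ∨
      (s 9 < s 0 ∧ s 0 < s 2 ∧ s 2 < s 8) ∨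
      (s 9 < s 2 ∧ s 2 < s 0 ∧ s 0 < s 8) ∨
      (s 9 < s 8 ∧ s 8 < s 0 ∧ s 0 < s 2) ∨
      (s 9 < s 8 ∧ s 8 < s 2 ∧ s 2 < s 0) := by
  generalize s 0 = A at *
  generalize s 2 = B at *
  generalize s 8 = C at *
  generalize s 9 = D at *
  rcases Nat.lt_or_gt_of_ne d1 with d1 | d1 <;> rcases Nat.lt_or_gt_of_ne d2 with d2 | d2 <;>
  rcases Nat.lt_or_gt_of_ne d3 with d3 | d3 <;> rcases Nat.lt_or_gt_of_ne d4 with d4 | d4 <;>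
  rcases Nat.lt_or_gt_of_ne d5 with d5 | d5 <;> rcases Nat.lt_or_gt_of_ne d6 with d6 | d6 <;>
  simp only [d1, d2, d3, d4, d5, d6, Nat.lt_asymm d1, Nat.lt_asymm d2, Nat.lt_asymm d3, Nat.lt_asymm d4,
    Nat.lt_asymm d5, Nat.lt_asymm d6, true_and, and_true, false_and, and_false, or_false, false_or,
    or_true, true_or, true_iff, false_iff, iff_true, iff_false, not_true, not_false_iff] at hn ⊢

theorem sort_main (s x : ℕ → ℕ) (o : Bool) (hx : ∀ p q, s p < s q → x p < x q)
    (e1 : s 1 = s 0) (e3 : s 3 = s 2) (e4 : s 4 = s 8) (e6 : s 6 = s 8) (e5 : s 5 = s 9)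
    (e7 : s 7 = s 9) (x1 : x 4 < x 8) (x2 : x 8 < x 6) (x3 : x 5 < x 9) (x4 : x 9 < x 7)
    (d1 : s 0 ≠ s 2) (d2 : s 0 ≠ s 8) (d3 : s 0 ≠ s 9) (d4 : s 2 ≠ s 8)
    (d5 : s 2 ≠ s 9) (d6 : s 8 ≠ s 9)
    (hn : ((s 0 < s 8 ∧ s 8 < s 2) ∨ (s 2 < s 8 ∧ s 8 < s 0)) ↔
      ((s 0 < s 9 ∧ s 9 < s 2) ∨ (s 2 < s 9 ∧ s 9 < s 0)))
    (ho : if o then x 0 < x 1 ∧ x 3 < x 2 else x 1 < x 0 ∧ x 2 < x 3) :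
    ∃ T f t, T ~r ms o f t ∧ (∀ p ∈ mi o, (p, nxt o p) ∈ T.zip T.tail) ∧
      T.IsChain (fun p q => x p < x q) := by
  have key := order16 s d1 d2 d3 d4 d5 d6 hn
  by_contra hcon
  have H : ∀ T f t, T ~r ms o f t → (∀ p ∈ mi o, (p, nxt o p) ∈ T.zip T.tail) →
      T.IsChain (fun p q => x p < x q) → False := fun T f t h1 h2 h3 => hcon ⟨T, f, t, h1, h2, h3⟩
  clear hcon
  cases o
  · simp only [Bool.false_eq_true, if_false] at ho
    obtain ⟨y1, y2⟩ := ho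
    rcases key with hh | hh | hh | hh | hh | hh | hh | hh | hh | hh | hh | hh | hh | hh | hh | hh
    · exact H [1, 0, 2, 3, 4, 8, 6, 5, 9, 7] true true (by decide) (by decide) (by
        simp only [List.isChain_cons_cons, List.isChain_singleton, and_true]
        refine ⟨?_, ?_, ?_, ?_, ?_, ?_, ?_, ?_, ?_⟩ <;> first | assumption | exact hx _ _ (by omega))
    · exact H [1, 0, 2, 3, 5, 9, 7, 4, 8, 6] true false (by decide) (by decide) (by
        simp only [List.isChain_cons_cons, List.isChain_singleton, and_true]
        refine ⟨?_, ?_, ?_, ?_, ?_, ?_, ?_, ?_, ?_⟩ <;> first | assumption | exact hx _ _ (by omega))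
    · exact H [1, 0, 4, 8, 6, 5, 9, 7, 2, 3] false true (by decide) (by decide) (by
        simp only [List.isChain_cons_cons, List.isChain_singleton, and_true]
        refine ⟨?_, ?_, ?_, ?_, ?_, ?_, ?_, ?_, ?_⟩ <;> first | assumption | exact hx _ _ (by omega))
    · exact H [1, 0, 5, 9, 7, 4, 8, 6, 2, 3] false false (by decide) (by decide) (by
        simp only [List.isChain_cons_cons, List.isChain_singleton, and_true]
        refine ⟨?_, ?_, ?_, ?_, ?_, ?_, ?_, ?_, ?_⟩ <;> first | assumption | exact hx _ _ (by omega))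
    · exact H [2, 3, 1, 0, 4, 8, 6, 5, 9, 7] false true (by decide) (by decide) (by
        simp only [List.isChain_cons_cons, List.isChain_singleton, and_true]
        refine ⟨?_, ?_, ?_, ?_, ?_, ?_, ?_, ?_, ?_⟩ <;> first | assumption | exact hx _ _ (by omega))
    · exact H [2, 3, 1, 0, 5, 9, 7, 4, 8, 6] false false (by decide) (by decide) (by
        simp only [List.isChain_cons_cons, List.isChain_singleton, and_true]
        refine ⟨?_, ?_, ?_, ?_, ?_, ?_, ?_, ?_, ?_⟩ <;> first | assumption | exact hx _ _ (by omega))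
    · exact H [2, 3, 4, 8, 6, 5, 9, 7, 1, 0] true true (by decide) (by decide) (by
        simp only [List.isChain_cons_cons, List.isChain_singleton, and_true]
        refine ⟨?_, ?_, ?_, ?_, ?_, ?_, ?_, ?_, ?_⟩ <;> first | assumption | exact hx _ _ (by omega))
    · exact H [2, 3, 5, 9, 7, 4, 8, 6, 1, 0] true false (by decide) (by decide) (by
        simp only [List.isChain_cons_cons, List.isChain_singleton, and_true]
        refine ⟨?_, ?_, ?_, ?_, ?_, ?_, ?_, ?_, ?_⟩ <;> first | assumption | exact hx _ _ (by omega))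
    · exact H [4, 8, 6, 1, 0, 2, 3, 5, 9, 7] true false (by decide) (by decide) (by
        simp only [List.isChain_cons_cons, List.isChain_singleton, and_true]
        refine ⟨?_, ?_, ?_, ?_, ?_, ?_, ?_, ?_, ?_⟩ <;> first | assumption | exact hx _ _ (by omega))
    · exact H [4, 8, 6, 2, 3, 1, 0, 5, 9, 7] false false (by decide) (by decide) (by
        simp only [List.isChain_cons_cons, List.isChain_singleton, and_true]
        refine ⟨?_, ?_, ?_, ?_, ?_, ?_, ?_, ?_, ?_⟩ <;> first | assumption | exact hx _ _ (by omega))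
    · exact H [4, 8, 6, 5, 9, 7, 1, 0, 2, 3] true true (by decide) (by decide) (by
        simp only [List.isChain_cons_cons, List.isChain_singleton, and_true]
        refine ⟨?_, ?_, ?_, ?_, ?_, ?_, ?_, ?_, ?_⟩ <;> first | assumption | exact hx _ _ (by omega))
    · exact H [4, 8, 6, 5, 9, 7, 2, 3, 1, 0] false true (by decide) (by decide) (by
        simp only [List.isChain_cons_cons, List.isChain_singleton, and_true]
        refine ⟨?_, ?_, ?_, ?_, ?_, ?_, ?_, ?_, ?_⟩ <;> first | assumption | exact hx _ _ (by omega))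
    · exact H [5, 9, 7, 1, 0, 2, 3, 4, 8, 6] true true (by decide) (by decide) (by
        simp only [List.isChain_cons_cons, List.isChain_singleton, and_true]
        refine ⟨?_, ?_, ?_, ?_, ?_, ?_, ?_, ?_, ?_⟩ <;> first | assumption | exact hx _ _ (by omega))
    · exact H [5, 9, 7, 2, 3, 1, 0, 4, 8, 6] false true (by decide) (by decide) (by
        simp only [List.isChain_cons_cons, List.isChain_singleton, and_true]
        refine ⟨?_, ?_, ?_, ?_, ?_, ?_, ?_, ?_, ?_⟩ <;> first | assumption | exact hx _ _ (by omega))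
    · exact H [5, 9, 7, 4, 8, 6, 1, 0, 2, 3] true false (by decide) (by decide) (by
        simp only [List.isChain_cons_cons, List.isChain_singleton, and_true]
        refine ⟨?_, ?_, ?_, ?_, ?_, ?_, ?_, ?_, ?_⟩ <;> first | assumption | exact hx _ _ (by omega))
    · exact H [5, 9, 7, 4, 8, 6, 2, 3, 1, 0] false false (by decide) (by decide) (by
        simp only [List.isChain_cons_cons, List.isChain_singleton, and_true]
        refine ⟨?_, ?_, ?_, ?_, ?_, ?_, ?_, ?_, ?_⟩ <;> first | assumption | exact hx _ _ (by omega))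
  · simp only [if_true] at ho
    obtain ⟨y1, y2⟩ := ho
    rcases key with hh | hh | hh | hh | hh | hh | hh | hh | hh | hh | hh | hh | hh | hh | hh | hh
    · exact H [0, 1, 3, 2, 4, 8, 6, 5, 9, 7] true true (by decide) (by decide) (by
        simp only [List.isChain_cons_cons, List.isChain_singleton, and_true]
        refine ⟨?_, ?_, ?_, ?_, ?_, ?_, ?_, ?_, ?_⟩ <;> first | assumption | exact hx _ _ (by omega))
    · exact H [0, 1, 3, 2, 5, 9, 7, 4, 8, 6] true false (by decide) (by decide) (by
        simp only [List.isChain_cons_cons, List.isChain_singleton, and_true]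
        refine ⟨?_, ?_, ?_, ?_, ?_, ?_, ?_, ?_, ?_⟩ <;> first | assumption | exact hx _ _ (by omega))
    · exact H [0, 1, 4, 8, 6, 5, 9, 7, 3, 2] false true (by decide) (by decide) (by
        simp only [List.isChain_cons_cons, List.isChain_singleton, and_true]
        refine ⟨?_, ?_, ?_, ?_, ?_, ?_, ?_, ?_, ?_⟩ <;> first | assumption | exact hx _ _ (by omega))
    · exact H [0, 1, 5, 9, 7, 4, 8, 6, 3, 2] false false (by decide) (by decide) (by
        simp only [List.isChain_cons_cons, List.isChain_singleton, and_true]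
        refine ⟨?_, ?_, ?_, ?_, ?_, ?_, ?_, ?_, ?_⟩ <;> first | assumption | exact hx _ _ (by omega))
    · exact H [3, 2, 0, 1, 4, 8, 6, 5, 9, 7] false true (by decide) (by decide) (by
        simp only [List.isChain_cons_cons, List.isChain_singleton, and_true]
        refine ⟨?_, ?_, ?_, ?_, ?_, ?_, ?_, ?_, ?_⟩ <;> first | assumption | exact hx _ _ (by omega))
    · exact H [3, 2, 0, 1, 5, 9, 7, 4, 8, 6] false false (by decide) (by decide) (by
        simp only [List.isChain_cons_cons, List.isChain_singleton, and_true]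
        refine ⟨?_, ?_, ?_, ?_, ?_, ?_, ?_, ?_, ?_⟩ <;> first | assumption | exact hx _ _ (by omega))
    · exact H [3, 2, 4, 8, 6, 5, 9, 7, 0, 1] true true (by decide) (by decide) (by
        simp only [List.isChain_cons_cons, List.isChain_singleton, and_true]
        refine ⟨?_, ?_, ?_, ?_, ?_, ?_, ?_, ?_, ?_⟩ <;> first | assumption | exact hx _ _ (by omega))
    · exact H [3, 2, 5, 9, 7, 4, 8, 6, 0, 1] true false (by decide) (by decide) (by
        simp only [List.isChain_cons_cons, List.isChain_singleton, and_true]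
        refine ⟨?_, ?_, ?_, ?_, ?_, ?_, ?_, ?_, ?_⟩ <;> first | assumption | exact hx _ _ (by omega))
    · exact H [4, 8, 6, 0, 1, 3, 2, 5, 9, 7] true false (by decide) (by decide) (by
        simp only [List.isChain_cons_cons, List.isChain_singleton, and_true]
        refine ⟨?_, ?_, ?_, ?_, ?_, ?_, ?_, ?_, ?_⟩ <;> first | assumption | exact hx _ _ (by omega))
    · exact H [4, 8, 6, 3, 2, 0, 1, 5, 9, 7] false false (by decide) (by decide) (by
        simp only [List.isChain_cons_cons, List.isChain_singleton, and_true]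
        refine ⟨?_, ?_, ?_, ?_, ?_, ?_, ?_, ?_, ?_⟩ <;> first | assumption | exact hx _ _ (by omega))
    · exact H [4, 8, 6, 5, 9, 7, 0, 1, 3, 2] true true (by decide) (by decide) (by
        simp only [List.isChain_cons_cons, List.isChain_singleton, and_true]
        refine ⟨?_, ?_, ?_, ?_, ?_, ?_, ?_, ?_, ?_⟩ <;> first | assumption | exact hx _ _ (by omega))
    · exact H [4, 8, 6, 5, 9, 7, 3, 2, 0, 1] false true (by decide) (by decide) (by
        simp only [List.isChain_cons_cons, List.isChain_singleton, and_true]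
        refine ⟨?_, ?_, ?_, ?_, ?_, ?_, ?_, ?_, ?_⟩ <;> first | assumption | exact hx _ _ (by omega))
    · exact H [5, 9, 7, 0, 1, 3, 2, 4, 8, 6] true true (by decide) (by decide) (by
        simp only [List.isChain_cons_cons, List.isChain_singleton, and_true]
        refine ⟨?_, ?_, ?_, ?_, ?_, ?_, ?_, ?_, ?_⟩ <;> first | assumption | exact hx _ _ (by omega))
    · exact H [5, 9, 7, 3, 2, 0, 1, 4, 8, 6] false true (by decide) (by decide) (by
        simp only [List.isChain_cons_cons, List.isChain_singleton, and_true]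
        refine ⟨?_, ?_, ?_, ?_, ?_, ?_, ?_, ?_, ?_⟩ <;> first | assumption | exact hx _ _ (by omega))
    · exact H [5, 9, 7, 4, 8, 6, 0, 1, 3, 2] true false (by decide) (by decide) (by
        simp only [List.isChain_cons_cons, List.isChain_singleton, and_true]
        refine ⟨?_, ?_, ?_, ?_, ?_, ?_, ?_, ?_, ?_⟩ <;> first | assumption | exact hx _ _ (by omega))
    · exact H [5, 9, 7, 4, 8, 6, 3, 2, 0, 1] false false (by decide) (by decide) (by
        simp only [List.isChain_cons_cons, List.isChain_singleton, and_true]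
        refine ⟨?_, ?_, ?_, ?_, ?_, ?_, ?_, ?_, ?_⟩ <;> first | assumption | exact hx _ _ (by omega))

variable {V : Type*} {G : SimpleGraph V} [DecidableEq V]

theorem main_side {l l' : List V} (hl : l.Nodup) (a : ℕ → V) (ha : ∀ p, a p ∈ l)
    (s x : ℕ → ℕ) (hs : ∀ p, s p = seg l l' (a p)) (hxx : ∀ p, x p = pos l (a p)) (o : Bool) 
    (e1 : s 1 = s 0) (e3 : s 3 = s 2) (e4 : s 4 = s 8) (e6 : s 6 = s 8) (e5 : s 5 = s 9)
    (e7 : s 7 = s 9) (x1 : x 4 < x 8) (x2 : x 8 < x 6) (x3 : x 5 < x 9) (x4 : x 9 < x 7)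
    (d1 : s 0 ≠ s 2) (d2 : s 0 ≠ s 8) (d3 : s 0 ≠ s 9) (d4 : s 2 ≠ s 8)
    (d5 : s 2 ≠ s 9) (d6 : s 8 ≠ s 9)
    (hn : ((s 0 < s 8 ∧ s 8 < s 2) ∨ (s 2 < s 8 ∧ s 8 < s 0)) ↔
      ((s 0 < s 9 ∧ s 9 < s 2) ∨ (s 2 < s 9 ∧ s 9 < s 0)))
    (ho : if o then x 0 < x 1 ∧ x 3 < x 2 else x 1 < x 0 ∧ x 2 < x 3) :
    ∃ f t, Side l l' a (ms o f t) (mi o) := by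
  have hx : ∀ p q, s p < s q → x p < x q := by
    intro p q h
    rw [hs, hs] at h
    rw [hxx, hxx]
    exact pos_lt_of_seg h
  obtain ⟨T, f, t, h1, h2, h3⟩ := sort_main s x o hx e1 e3 e4 e6 e5 e7 x1 x2 x3 x4 d1 d2 d3 d4 d5 d6 hn ho
  refine ⟨f, t, side_of_sorted hl a (nxt o) ?_ (fun p _ => ha p) ?_ h1 ?_⟩
  · rintro rfl
    have := h1.perm.length_eq
    cases o <;> cases f <;> cases t <;> simp [ms] at this
  · have h4 : T.Pairwise (fun p q => x p < x q) := by
      have : IsTrans ℕ (fun p q => x p < x q) := ⟨fun _ _ _ h h' => lt_trans h h'⟩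
      exact List.isChain_iff_pairwise.1 h3
    refine h4.imp ?_
    intro p q h
    rwa [← hxx, ← hxx]
  · intro p hp
    refine ⟨h2 p hp, ?_⟩
    rw [← hs, ← hs]
    clear h2
    cases o <;> simp [mi] at hp <;> rcases hp with rfl | rfl | rfl | rfl | rfl | rfl <;> simp only [nxt] <;> omega

theorem pair_side {l l' : List V} (hl : l.Nodup) (a : ℕ → V) (ha : ∀ p, a p ∈ l) (p q : ℕ)
    (h : seg l l' (a p) = seg l l' (a q)) (hp : pos l (a p) < pos l (a q)) :
    Side l l' a [p, q] [p] := by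
  refine side_of_sorted hl a (T := [p, q]) (fun _ => q) (by simp) (fun p _ => ha p) (by simpa using hp) 
    (List.IsRotated.refl _) (by simpa using h)

theorem c4_side {l l' : List V} (hl : l.Nodup) (a : ℕ → V) (ha : ∀ p, a p ∈ l) (p q p' q' : ℕ)
    (hpp : p ≠ p')
    (h : seg l l' (a p) = seg l l' (a q)) (hp : pos l (a p) < pos l (a q)) 
    (h' : seg l l' (a p') = seg l l' (a q')) (hp' : pos l (a p') < pos l (a q'))
    (hne : seg l l' (a p) ≠ seg l l' (a p')) :
    Side l l' a [p, q, p', q'] [p, p'] := by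
  rcases Nat.lt_or_gt_of_ne hne with hlt | hlt
  · have := pos_lt_of_seg (h ▸ hlt)
    refine side_of_sorted hl a (T := [p, q, p', q']) (fun n => if n = p then q else q') (by simp)
      (fun p _ => ha p) (by simp; omega) (List.IsRotated.refl _) (by simp [h, h', hpp.symm])
  · have := pos_lt_of_seg (h' ▸ hlt)
    refine side_of_sorted hl a (T := [p', q', p, q]) (fun n => if n = p then q else q') (by simp)
      (fun p _ => ha p) (by simp; omega) ⟨2, rfl⟩ (by simp [h, h', hpp.symm])

section
variable {l1 l2 : List V} {L : ℕ} {ι : Type*} {a b : ι → V} {mid : ι → List V}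

theorem Sys.pos1_inj (S : Sys G l1 l2 L a b mid) {i j : ι} (h : pos l1 (a i) = pos l1 (a j)) : i = j := by
  exact S.ai ((List.idxOf_inj (S.a1 i)).1 h)

theorem Sys.pos2_inj (S : Sys G l1 l2 L a b mid) {i j : ι} (h : pos l2 (b i) = pos l2 (b j)) : i = j :=
  S.swap.pos1_inj h

theorem Sys.double' (S : Sys G l1 l2 L a b mid) {i j : ι}
    (h1 : seg l1 l2 (a i) = seg l1 l2 (a j)) (h2 : seg l2 l1 (b i) = seg l2 l1 (b j))
    (hlt : pos l1 (a i) < pos l1 (a j)) : False := by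
  let e : ℕ → ι := fun n => if n = 0 then i else j
  have s1 : Side l1 l2 (fun p => a (e p)) [0, 1] [0] := 
    pair_side S.c1.1 _ (fun p => S.a1 _) 0 1 (by simpa [e] using h1) (by simpa [e] using hlt)
  have hne : pos l2 (b i) ≠ pos l2 (b j) := fun h => by
    rw [S.pos2_inj h] at hlt; exact lt_irrefl _ hlt
  rcases Nat.lt_or_gt_of_ne hne with h | h
  · exact S.contra e cert_double1 (by decide) (by decide) s1 
      (pair_side S.c2.1 _ (fun p => S.b2 _) 0 1 (by simpa [e] using h2) (by simpa [e] using h))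
  · exact S.contra e cert_double2 (by decide) (by decide) s1 
      (pair_side S.c2.1 _ (fun p => S.b2 _) 1 0 (by simpa [e] using h2.symm) (by simpa [e] using h))

theorem Sys.double (S : Sys G l1 l2 L a b mid) {i j : ι}
    (h1 : seg l1 l2 (a i) = seg l1 l2 (a j)) (h2 : seg l2 l1 (b i) = seg l2 l1 (b j)) : i = j := by
  by_contra hij
  have hne : pos l1 (a i) ≠ pos l1 (a j) := fun h => hij (S.pos1_inj h)
  rcases Nat.lt_or_gt_of_ne hne with h | h
  · exact S.double' h1 h2 h
  · exact S.double' h1.symm h2.symm h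

theorem Sys.c4 (S : Sys G l1 l2 L a b mid) {i0 i1 i2 i3 : ι}
    (h01 : seg l1 l2 (a i0) = seg l1 l2 (a i1)) (h23 : seg l1 l2 (a i2) = seg l1 l2 (a i3))
    (n1 : seg l1 l2 (a i0) ≠ seg l1 l2 (a i2))
    (h02 : seg l2 l1 (b i0) = seg l2 l1 (b i2)) (h13 : seg l2 l1 (b i1) = seg l2 l1 (b i3))
    (n2 : seg l2 l1 (b i0) ≠ seg l2 l1 (b i1))
    (p01 : pos l1 (a i0) < pos l1 (a i1)) (p23 : pos l1 (a i2) < pos l1 (a i3))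
    (p02 : pos l2 (b i0) < pos l2 (b i2)) (p13 : pos l2 (b i1) < pos l2 (b i3)) : False := by
  let e : ℕ → ι := fun n => match n with
    | 0 => i0
    | 1 => i1
    | 2 => i2
    | _ => i3
  exact S.contra e cert_c4 (by decide) (by decide) 
    (c4_side S.c1.1 _ (fun p => S.a1 _) 0 1 2 3 (by decide) h01 p01 h23 p23 n1)
    (c4_side S.c2.1 _ (fun p => S.b2 _) 0 2 1 3 (by decide) h02 p02 h13 p13 n2)

theorem ms_nodup (o f t : Bool) : (ms o f t).Nodup := by revert o f t; decide
theorem ms_perm (o f t o' f' t' : Bool) : (ms o f t).Perm ((ms o' f' t').map rho) := by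
  revert o f t o' f' t'; decide +kernel

theorem Sys.main (S : Sys G l1 l2 L a b mid) (e : ℕ → ι) (s x s' x' : ℕ → ℕ)
    (hs : ∀ p, s p = seg l1 l2 (a (e p))) (hx : ∀ p, x p = pos l1 (a (e p)))
    (hs' : ∀ p, s' p = seg l2 l1 (b (e p))) (hx' : ∀ p, x' p = pos l2 (b (e p)))
    (o o' : Bool)
    (e1 : s 1 = s 0) (e3 : s 3 = s 2) (e4 : s 4 = s 8) (e6 : s 6 = s 8) (e5 : s 5 = s 9)
    (e7 : s 7 = s 9) (x1 : x 4 < x 8) (x2 : x 8 < x 6) (x3 : x 5 < x 9) (x4 : x 9 < x 7)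
    (d1 : s 0 ≠ s 2) (d2 : s 0 ≠ s 8) (d3 : s 0 ≠ s 9) (d4 : s 2 ≠ s 8)
    (d5 : s 2 ≠ s 9) (d6 : s 8 ≠ s 9)
    (hn : ((s 0 < s 8 ∧ s 8 < s 2) ∨ (s 2 < s 8 ∧ s 8 < s 0)) ↔
      ((s 0 < s 9 ∧ s 9 < s 2) ∨ (s 2 < s 9 ∧ s 9 < s 0)))
    (ho : if o then x 0 < x 1 ∧ x 3 < x 2 else x 1 < x 0 ∧ x 2 < x 3)
    (e1' : s' 5 = s' 4) (e3' : s' 7 = s' 6) (e4' : s' 0 = s' 8) (e6' : s' 2 = s' 8) (e5' : s' 1 = s' 9)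
    (e7' : s' 3 = s' 9) (x1' : x' 0 < x' 8) (x2' : x' 8 < x' 2) (x3' : x' 1 < x' 9) (x4' : x' 9 < x' 3)
    (d1' : s' 4 ≠ s' 6) (d2' : s' 4 ≠ s' 8) (d3' : s' 4 ≠ s' 9) (d4' : s' 6 ≠ s' 8)
    (d5' : s' 6 ≠ s' 9) (d6' : s' 8 ≠ s' 9)
    (hn' : ((s' 4 < s' 8 ∧ s' 8 < s' 6) ∨ (s' 6 < s' 8 ∧ s' 8 < s' 4)) ↔
      ((s' 4 < s' 9 ∧ s' 9 < s' 6) ∨ (s' 6 < s' 9 ∧ s' 9 < s' 4)))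
    (ho' : if o' then x' 4 < x' 5 ∧ x' 7 < x' 6 else x' 5 < x' 4 ∧ x' 6 < x' 7) : False := by
  obtain ⟨f, t, h1⟩ := main_side S.c1.1 (fun p => a (e p)) (fun p => S.a1 _) s x hs hx o
    e1 e3 e4 e6 e5 e7 x1 x2 x3 x4 d1 d2 d3 d4 d5 d6 hn ho
  obtain ⟨f', t', h2⟩ := main_side S.c2.1 (fun p => b (e (rho p))) (fun p => S.b2 _)
    (fun p => s' (rho p)) (fun p => x' (rho p)) (fun p => hs' _) (fun p => hx' _) o'
    e1' e3' e4' e6' e5' e7' x1' x2' x3' x4' d1' d2' d3' d4' d5' d6' hn' ho'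
  have h3 := Side.rho (a := fun p => b (e p)) h2
  obtain ⟨X, Y, hc⟩ := main_cert o f t o' f' t'
  exact S.contra e hc (ms_nodup o f t) (ms_perm _ _ _ _ _ _) h1 h3
end
end LC

open SimpleGraph
namespace LC
variable {V : Type*} {G : SimpleGraph V} [DecidableEq V]

section
variable {l1 l2 : List V} {L : ℕ} {ι : Type*} {a b : ι → V} {mid : ι → List V}

theorem Sys.rev (S : Sys G l1 l2 L a b mid) {i i' j j' : ι}
    (h1 : seg l1 l2 (a i) = seg l1 l2 (a i')) (h2 : seg l1 l2 (a j) = seg l1 l2 (a j'))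
    (h3 : seg l2 l1 (b i) = seg l2 l1 (b j)) (h4 : seg l2 l1 (b i') = seg l2 l1 (b j'))
    (hn : seg l2 l1 (b i) ≠ seg l2 l1 (b i'))
    (x1 : pos l2 (b i) < pos l2 (b j)) (x2 : pos l2 (b i') < pos l2 (b j')) :
    (pos l1 (a i) < pos l1 (a i') ∧ pos l1 (a j') < pos l1 (a j)) ∨
    (pos l1 (a i') < pos l1 (a i) ∧ pos l1 (a j) < pos l1 (a j')) := by
  have n1 : seg l1 l2 (a i) ≠ seg l1 l2 (a j) := by
    intro h
    have := S.double h h3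
    subst this
    exact lt_irrefl _ x1
  have hi : pos l1 (a i) ≠ pos l1 (a i') := fun h => hn (by rw [S.pos1_inj h])
  have hj : pos l1 (a j) ≠ pos l1 (a j') := fun h => hn (by rw [h3, h4, S.pos1_inj h])
  rcases Nat.lt_or_gt_of_ne hi with hi | hi <;> rcases Nat.lt_or_gt_of_ne hj with hj | hj
  · exact (S.c4 h1 h2 n1 h3 h4 hn hi hj x1 x2).elim
  · exact Or.inl ⟨hi, hj⟩
  · exact Or.inr ⟨hi, hj⟩
  · exact (S.c4 h1.symm h2.symm (by rw [← h1, ← h2]; exact n1) h4 h3 hn.symm hi hj x2 x1).elim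

/-- `p` is a midpoint of `q0` and `q1` on the second cycle -/
structure Mid2 (l1 l2 : List V) (b : ι → V) (p q0 q1 : ι) : Prop where
  s0 : seg l2 l1 (b q0) = seg l2 l1 (b p)
  x0 : pos l2 (b q0) < pos l2 (b p)
  s1 : seg l2 l1 (b q1) = seg l2 l1 (b p)
  x1 : pos l2 (b p) < pos l2 (b q1)

theorem Sys.lemA (S : Sys G l1 l2 L a b mid) {p p' q0 q0' q1 q1' : ι}
    (hp : Mid2 l1 l2 b p q0 q1) (hp' : Mid2 l1 l2 b p' q0' q1')
    (e0 : seg l1 l2 (a q0) = seg l1 l2 (a q0')) (e1 : seg l1 l2 (a q1) = seg l1 l2 (a q1'))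
    (h : seg l1 l2 (a p) = seg l1 l2 (a p')) : p = p' := by
  by_contra hne
  have hn : seg l2 l1 (b p) ≠ seg l2 l1 (b p') := fun h2 => hne (S.double h h2)
  have A1 := S.rev e0 h hp.s0 hp'.s0 (by rw [hp.s0, hp'.s0]; exact hn) hp.x0 hp'.x0
  have A2 := S.rev h e1 hp.s1.symm hp'.s1.symm hn hp.x1 hp'.x1
  have A3 := S.rev e0 e1 (hp.s0.trans hp.s1.symm) (hp'.s0.trans hp'.s1.symm)
    (by rw [hp.s0, hp'.s0]; exact hn) (hp.x0.trans hp.x1) (hp'.x0.trans hp'.x1)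
  omega

def btw (x y z : ℕ) : Bool := decide ((x < y ∧ y < z) ∨ (z < y ∧ y < x))

theorem Sys.injp (S : Sys G l1 l2 L a b mid) {p p' q0 q0' q1 q1' r0 r0' r1 r1' : ι}
    (hp : Mid2 l1 l2 b p q0 q1) (hp' : Mid2 l1 l2 b p' q0' q1')
    (hr : Mid2 l2 l1 a p r0 r1) (hr' : Mid2 l2 l1 a p' r0' r1')
    (e0 : seg l1 l2 (a q0) = seg l1 l2 (a q0')) (e1 : seg l1 l2 (a q1) = seg l1 l2 (a q1'))
    (f0 : seg l2 l1 (b r0) = seg l2 l1 (b r0')) (f1 : seg l2 l1 (b r1) = seg l2 l1 (b r1'))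
    (b1 : btw (seg l1 l2 (a q0)) (seg l1 l2 (a p)) (seg l1 l2 (a q1)) = 
      btw (seg l1 l2 (a q0')) (seg l1 l2 (a p')) (seg l1 l2 (a q1')))
    (b2 : btw (seg l2 l1 (b r0)) (seg l2 l1 (b p)) (seg l2 l1 (b r1)) = 
      btw (seg l2 l1 (b r0')) (seg l2 l1 (b p')) (seg l2 l1 (b r1'))) : p = p' := by
  by_contra hne
  have N1 : seg l1 l2 (a p) ≠ seg l1 l2 (a p') := fun h => hne (S.lemA hp hp' e0 e1 h)
  have N2 : seg l2 l1 (b p) ≠ seg l2 l1 (b p') := fun h => hne (S.swap.lemA hr hr' f0 f1 h)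
  have O1 := S.rev e0 e1 (hp.s0.trans hp.s1.symm) (hp'.s0.trans hp'.s1.symm)
    (by rw [hp.s0, hp'.s0]; exact N2) (hp.x0.trans hp.x1) (hp'.x0.trans hp'.x1)
  have O2 := S.swap.rev f0 f1 (hr.s0.trans hr.s1.symm) (hr'.s0.trans hr'.s1.symm)
    (by rw [hr.s0, hr'.s0]; exact N1) (hr.x0.trans hr.x1) (hr'.x0.trans hr'.x1)
  -- distinctness
  have D : ∀ {i j : ι}, seg l2 l1 (b i) = seg l2 l1 (b j) → pos l2 (b i) < pos l2 (b j) →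
      seg l1 l2 (a i) ≠ seg l1 l2 (a j) := by
    intro i j h hx h'
    rw [S.double h' h] at hx
    exact lt_irrefl _ hx
  have D' : ∀ {i j : ι}, seg l1 l2 (a i) = seg l1 l2 (a j) → pos l1 (a i) < pos l1 (a j) →
      seg l2 l1 (b i) ≠ seg l2 l1 (b j) := by
    intro i j h hx h'
    rw [S.double h h'] at hx
    exact lt_irrefl _ hx
  let e : ℕ → ι := fun n => match n with
    | 0 => q0
    | 1 => q0'
    | 2 => q1
    | 3 => q1'
    | 4 => r0
    | 5 => r0'
    | 6 => r1
    | 7 => r1'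
    | 8 => p
    | _ => p'
  rw [← e0, ← e1] at b1
  rw [← f0, ← f1] at b2
  simp only [btw, decide_eq_decide] at b1 b2
  have M := fun o o' ho ho' => S.main e (fun n => seg l1 l2 (a (e n))) (fun n => pos l1 (a (e n)))
    (fun n => seg l2 l1 (b (e n))) (fun n => pos l2 (b (e n))) (fun _ => rfl) (fun _ => rfl)
    (fun _ => rfl) (fun _ => rfl) o o' e0.symm e1.symm hr.s0 hr.s1 hr'.s0 hr'.s1
    hr.x0 hr.x1 hr'.x0 hr'.x1 (D (hp.s0.trans hp.s1.symm) (hp.x0.trans hp.x1))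
    (D hp.s0 hp.x0) (e0 ▸ D hp'.s0 hp'.x0) (D hp.s1.symm hp.x1).symm
    (e1 ▸ (D hp'.s1.symm hp'.x1).symm) N1 b1 ho
    f0.symm f1.symm hp.s0 hp.s1 hp'.s0 hp'.s1
    hp.x0 hp.x1 hp'.x0 hp'.x1 (D' (hr.s0.trans hr.s1.symm) (hr.x0.trans hr.x1))
    (D' hr.s0 hr.x0) (f0 ▸ D' hr'.s0 hr'.x0) (D' hr.s1.symm hr.x1).symm
    (f1 ▸ (D' hr'.s1.symm hr'.x1).symm) N2 b2 ho'
  rcases O1 with O1 | O1 <;> rcases O2 with O2 | O2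
  · exact M true true (by simp only [Bool.false_eq_true, if_true, if_false]; exact O1) (by simp only [Bool.false_eq_true, if_true, if_false]; exact O2)
  · exact M true false (by simp only [Bool.false_eq_true, if_true, if_false]; exact O1) (by simp only [Bool.false_eq_true, if_true, if_false]; exact O2)
  · exact M false true (by simp only [Bool.false_eq_true, if_true, if_false]; exact O1) (by simp only [Bool.false_eq_true, if_true, if_false]; exact O2)
  · exact M false false (by simp only [Bool.false_eq_true, if_true, if_false]; exact O1) (by simp only [Bool.false_eq_true, if_true, if_false]; exact O2)

end

open Finset

theorem bad_count {ι α : Type*} [Fintype ι] [DecidableEq ι] [LinearOrder α] (s : ι → ℕ) (x : ι → α)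
    (hx : Function.Injective x) (K m : ℕ) (hs : ∀ i, s i < K) :
    (univ.filter (fun p => (univ.filter (fun q => s q = s p ∧ x q < x p)).card < m)).card ≤ m * K := by
  have : (univ.filter (fun p => (univ.filter (fun q => s q = s p ∧ x q < x p)).card < m)).card ≤ 
      (range m ×ˢ range K).card := by
    refine card_le_card_of_injOn (fun p => ((univ.filter (fun q => s q = s p ∧ x q < x p)).card, s p))
      ?_ ?_
    · intro p hp
      simp only [coe_filter, mem_univ, true_and, Set.mem_ofPred_eq] at hp
      simp [hp, hs]
    · have key : ∀ p p', s p = s p' → x p < x p' → 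
          (univ.filter (fun q => s q = s p ∧ x q < x p)).card < 
          (univ.filter (fun q => s q = s p' ∧ x q < x p')).card := by
        intro p p' h1 h2
        apply card_lt_card
        rw [ssubset_iff_of_subset]
        · exact ⟨p, by simp [h1, h2], by simp⟩
        · intro q
          simp only [mem_filter, mem_univ, true_and]
          rintro ⟨h3, h4⟩
          exact ⟨h3.trans h1, h4.trans h2⟩
      intro p _ p' _ h
      simp only [Prod.mk.injEq] at h
      rcases lt_trichotomy (x p) (x p') with h1 | h1 | h1
      · have := key p p' h.2 h1; omega
      · exact hx h1
      · have := key p' p h.2.symm h1; omega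
  simpa using this

theorem Sys.count {l1 l2 : List V} {L : ℕ} {ι : Type*} {a b : ι → V} {mid : ι → List V} [Fintype ι]
    (S : Sys G l1 l2 L a b mid) (K m : ℕ) (hK1 : ∀ i, seg l1 l2 (a i) < K) 
    (hK2 : ∀ i, seg l2 l1 (b i) < K) (hm : K ^ 3 < m ^ 5) (hK : 0 < K) : Fintype.card ι < 8 * m * K := by
  classical
  by_contra hge
  push Not at hge
  set s1 : ι → ℕ := fun i => seg l1 l2 (a i) with hs1
  set s2 : ι → ℕ := fun i => seg l2 l1 (b i) with hs2
  set x1 : ι → ℕ := fun i => pos l1 (a i) with hx1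
  set x2 : ι → ℕ := fun i => pos l2 (b i) with hx2
  have ix1 : Function.Injective x1 := fun i j h => S.pos1_inj h
  have ix2 : Function.Injective x2 := fun i j h => S.pos2_inj h
  set L1 : ι → Finset ι := fun p => univ.filter (fun q => s1 q = s1 p ∧ x1 q < x1 p) with hL1
  set U1 : ι → Finset ι := fun p => univ.filter (fun q => s1 q = s1 p ∧ x1 p < x1 q) with hU1
  set L2 : ι → Finset ι := fun p => univ.filter (fun q => s2 q = s2 p ∧ x2 q < x2 p) with hL2
  set U2 : ι → Finset ι := fun p => univ.filter (fun q => s2 q = s2 p ∧ x2 p < x2 q) with hU2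
  have B1 : (univ.filter (fun p => (L1 p).card < m)).card ≤ m * K := bad_count s1 x1 ix1 K m hK1
  have B2 : (univ.filter (fun p => (L2 p).card < m)).card ≤ m * K := bad_count s2 x2 ix2 K m hK2
  have B3 : (univ.filter (fun p => (U1 p).card < m)).card ≤ m * K := 
    bad_count s1 (fun i => OrderDual.toDual (x1 i)) (fun i j h => ix1 h) K m hK1
  have B4 : (univ.filter (fun p => (U2 p).card < m)).card ≤ m * K := 
    bad_count s2 (fun i => OrderDual.toDual (x2 i)) (fun i j h => ix2 h) K m hK2
  set Gd : Finset ι := univ.filter (fun p => m ≤ (L1 p).card ∧ m ≤ (L2 p).card ∧ m ≤ (U1 p).card ∧ 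
    m ≤ (U2 p).card) with hGd
  have hcov : (univ : Finset ι) ⊆ Gd ∪ (univ.filter (fun p => (L1 p).card < m) ∪ 
      univ.filter (fun p => (L2 p).card < m) ∪ (univ.filter (fun p => (U1 p).card < m) ∪
      univ.filter (fun p => (U2 p).card < m))) := by
    intro p _
    simp only [hGd, mem_union, mem_filter, mem_univ, true_and]
    omega
  have hc := card_le_card hcov
  have hG : 4 * (m * K) ≤ Gd.card := by
    have u1 := card_union_le Gd (univ.filter (fun p => (L1 p).card < m) ∪ 
      univ.filter (fun p => (L2 p).card < m) ∪ (univ.filter (fun p => (U1 p).card < m) ∪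
      univ.filter (fun p => (U2 p).card < m)))
    have u2 := card_union_le (univ.filter (fun p => (L1 p).card < m) ∪ 
      univ.filter (fun p => (L2 p).card < m)) (univ.filter (fun p => (U1 p).card < m) ∪
      univ.filter (fun p => (U2 p).card < m))
    have u3 := card_union_le (univ.filter (fun p => (L1 p).card < m)) 
      (univ.filter (fun p => (L2 p).card < m))
    have u4 := card_union_le (univ.filter (fun p => (U1 p).card < m)) 
      (univ.filter (fun p => (U2 p).card < m))
    have : 8 * m * K = 8 * (m * K) := by ring
    rw [card_univ] at hc
    omega
  -- tuples
  set X : Finset (Σ _ : ι, (ι × ι) × (ι × ι)) := 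
    Gd.sigma (fun p => (L2 p ×ˢ U2 p) ×ˢ (L1 p ×ˢ U1 p)) with hX
  have hXlow : Gd.card * m ^ 4 ≤ X.card := by
    rw [hX, card_sigma, ← smul_eq_mul]
    apply card_nsmul_le_sum
    intro p hp
    simp only [hGd, mem_filter, mem_univ, true_and] at hp
    obtain ⟨h1, h2, h3, h4⟩ := hp
    rw [card_product, card_product, card_product]
    calc m ^ 4 = (m * m) * (m * m) := by ring
      _ ≤ _ := Nat.mul_le_mul (Nat.mul_le_mul h2 h4) (Nat.mul_le_mul h1 h3)
  set F : (Σ _ : ι, (ι × ι) × (ι × ι)) → ((ℕ × ℕ) × (ℕ × ℕ)) × (Bool × Bool) := fun t =>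
    (((s1 t.2.1.1, s1 t.2.1.2), (s2 t.2.2.1, s2 t.2.2.2)), 
      (btw (s1 t.2.1.1) (s1 t.1) (s1 t.2.1.2), btw (s2 t.2.2.1) (s2 t.1) (s2 t.2.2.2))) with hF
  have hXup : X.card ≤ ((((range K ×ˢ range K) ×ˢ (range K ×ˢ range K)) ×ˢ
      (univ : Finset (Bool × Bool)))).card := by
    refine card_le_card_of_injOn F ?_ ?_
    · intro t _
      simp only [hF, coe_product, Set.mem_prod, mem_coe, mem_range, mem_univ, and_true]
      exact ⟨⟨hK1 _, hK1 _⟩, hK2 _, hK2 _⟩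
    · rintro ⟨p, ⟨q0, q1⟩, r0, r1⟩ ht ⟨p', ⟨q0', q1'⟩, r0', r1'⟩ ht' hFF
      simp only [hX, mem_coe, mem_sigma, mem_product, hL1, hL2, hU1, hU2, mem_filter, mem_univ,
        true_and] at ht ht'
      simp only [hF, Prod.mk.injEq] at hFF
      obtain ⟨_, ⟨⟨t1, t2⟩, t3, t4⟩, ⟨t5, t6⟩, t7, t8⟩ := ht
      obtain ⟨_, ⟨⟨w1, w2⟩, w3, w4⟩, ⟨w5, w6⟩, w7, w8⟩ := ht'
      obtain ⟨⟨⟨g1, g2⟩, g3, g4⟩, g5, g6⟩ := hFF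
      have hpp : p = p' := S.injp ⟨t1, t2, t3, t4⟩ ⟨w1, w2, w3, w4⟩ ⟨t5, t6, t7, t8⟩ 
        ⟨w5, w6, w7, w8⟩ g1 g2 g3 g4 g5 g6
      subst hpp
      have := S.double g1 (t1.trans w1.symm)
      subst this
      have := S.double g2 (t3.trans w3.symm)
      subst this
      have := S.double (t5.trans w5.symm) g3
      subst this
      have := S.double (t7.trans w7.symm) g4
      subst this
      rfl
  simp only [card_product, card_range, card_univ, Fintype.card_prod, Fintype.card_bool] at hXup
  have h5 : 4 * (m * K) * m ^ 4 ≤ K * K * (K * K) * (2 * 2) :=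
    ((Nat.mul_le_mul_right _ hG).trans hXlow).trans hXup
  have h6 : (4 * K) * m ^ 5 ≤ (4 * K) * K ^ 3 := by
    calc (4 * K) * m ^ 5 = 4 * (m * K) * m ^ 4 := by ring
      _ ≤ _ := h5
      _ = _ := by ring
  have := Nat.le_of_mul_le_mul_left h6 (by omega)
  omega
end LC

namespace LC
section menger
variable {V : Type*} [DecidableEq V]

def AB (E : Finset (V × V)) (A B : Set V) (l : List V) : Prop :=
  l ≠ [] ∧ (∀ a ∈ l.head?, a ∈ A) ∧ (∀ b ∈ l.getLast?, b ∈ B) ∧ l.IsChain (fun x y => (x, y) ∈ E)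

theorem AB_split {E : Finset (V × V)} {A B : Set V} {u w : List V} {v : V} :
    AB E A B (u ++ v :: w) ↔ AB E A {v} (u ++ [v]) ∧ AB E {v} B (v :: w) := by
  unfold AB
  rw [List.isChain_split]
  have h1 : (u ++ v :: w).head? = (u ++ [v]).head? := by cases u <;> simp
  rw [h1, List.getLast?_append_cons]
  simp
  tauto

theorem AB.mono {E E' : Finset (V × V)} {A A' B B' : Set V} {l : List V} (h : AB E A B l)
    (hE : E ⊆ E') (hA : A ⊆ A') (hB : B ⊆ B') : AB E' A' B' l :=
  ⟨h.1, fun a ha => hA (h.2.1 a ha), fun b hb => hB (h.2.2.1 b hb), h.2.2.2.imp fun _ _ h => hE h⟩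

def Sep (E : Finset (V × V)) (A B : Set V) (S : Finset V) : Prop :=
  ∀ l, AB E A B l → ∃ s ∈ S, s ∈ l

theorem first_split (P : Finset V) : ∀ (l : List V), (∃ p ∈ P, p ∈ l) → 
    ∃ u p w, l = u ++ p :: w ∧ p ∈ P ∧ ∀ z ∈ u, z ∉ P := by
  intro l
  induction l with
  | nil => rintro ⟨p, _, h⟩; simp at h
  | cons x l ih =>
    rintro ⟨p, hp, h⟩
    by_cases hx : x ∈ P
    · exact ⟨[], x, l, rfl, hx, by simp⟩
    · have : p ∈ l := by
        rcases List.mem_cons.1 h with rfl | h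
        · exact absurd hp hx
        · exact h
      obtain ⟨u, q, w, rfl, hq, hu⟩ := ih ⟨p, hp, this⟩
      refine ⟨x :: u, q, w, rfl, hq, ?_⟩
      intro z hz
      rcases List.mem_cons.1 hz with rfl | hz
      · exact hx
      · exact hu z hz

theorem last_split (P : Finset V) (l : List V) (h : ∃ p ∈ P, p ∈ l) : 
    ∃ u p w, l = u ++ p :: w ∧ p ∈ P ∧ ∀ z ∈ w, z ∉ P := by
  obtain ⟨u, p, w, h1, h2, h3⟩ := first_split P l.reverse (by simpa using h)
  refine ⟨w.reverse, p, u.reverse, ?_, h2, by simpa using h3⟩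
  have := congrArg List.reverse h1
  simpa using this

theorem AB_erase_left {E : Finset (V × V)} {A B : Set V} {x y : V} {u : List V} {p : V} 
    (h : AB E A B (u ++ [p])) (hx : x ∉ u) : AB (E.erase (x, y)) A B (u ++ [p]) := by
  refine ⟨h.1, h.2.1, h.2.2.1, ?_⟩
  have h4 := h.2.2.2
  clear h
  induction u with
  | nil => simp
  | cons a u ih =>
    simp only [List.cons_append] at h4 ⊢
    cases u with
    | nil =>
      simp only [List.nil_append, List.isChain_cons_cons, List.isChain_singleton, and_true] at h4 ⊢
      rw [Finset.mem_erase]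
      refine ⟨?_, h4⟩
      rintro ⟨⟩
      simp at hx
    | cons b u =>
      simp only [List.cons_append, List.isChain_cons_cons] at h4 ⊢
      refine ⟨?_, ih (fun h => hx (List.mem_cons_of_mem _ h)) h4.2⟩
      rw [Finset.mem_erase]
      refine ⟨?_, h4.1⟩
      rintro ⟨⟩
      simp at hx

theorem AB_erase_right {E : Finset (V × V)} {A B : Set V} {x y : V} : ∀ {w : List V} {p : V},
    AB E A B (p :: w) → y ∉ w → AB (E.erase (x, y)) A B (p :: w) := by
  intro w p h hy
  refine ⟨h.1, h.2.1, h.2.2.1, ?_⟩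
  have h4 := h.2.2.2
  clear h
  induction w generalizing p with
  | nil => simp
  | cons b w ih =>
    simp only [List.isChain_cons_cons] at h4 ⊢
    refine ⟨?_, ih (fun h => hy (List.mem_cons_of_mem _ h)) h4.2⟩
    rw [Finset.mem_erase]
    refine ⟨?_, h4.1⟩
    rintro ⟨⟩
    simp at hy

def Linked (E : Finset (V × V)) (A B : Set V) (s : ℕ) : Prop :=
  ∃ F : Fin s → List V, (∀ i, AB E A B (F i)) ∧ ∀ i j, i ≠ j → List.Disjoint (F i) (F j)

theorem linked_left {E : Finset (V × V)} {A : Set V} {P : Finset V} {s : ℕ} (hP : P.card = s)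
    (h : Linked E A P s) : ∃ u : V → List V, (∀ p ∈ P, AB E A {p} (u p ++ [p]) ∧ ∀ z ∈ u p, z ∉ P) ∧
      ∀ p ∈ P, ∀ q ∈ P, p ≠ q → List.Disjoint (u p ++ [p]) (u q ++ [q]) := by
  obtain ⟨F, h1, h2⟩ := h
  have h3 : ∀ i, ∃ u p w, F i = u ++ p :: w ∧ p ∈ P ∧ ∀ z ∈ u, z ∉ P := by
    intro i
    apply first_split
    obtain ⟨a1, a2, a3, a4⟩ := h1 i
    exact ⟨(F i).getLast a1, a3 _ (List.getLast?_eq_getLast_of_ne_nil a1), List.getLast_mem a1⟩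
  choose u f w hF hfP hu using h3
  have hi : Function.Injective f := by
    intro i j hij
    by_contra hne
    refine h2 i j hne (a := f i) ?_ ?_
    · rw [hF i]; simp
    · rw [hF j, hij]; simp
  have hs : ∀ p, p ∈ P → ∃ i, f i = p := by
    have : Finset.univ.image f = P := by
      apply Finset.eq_of_subset_of_card_le
      · intro x hx
        obtain ⟨i, _, rfl⟩ := Finset.mem_image.1 hx
        exact hfP i
      · rw [Finset.card_image_of_injective _ hi]; simp [hP]
    intro p hp
    rw [← this] at hp
    obtain ⟨i, _, h⟩ := Finset.mem_image.1 hp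
    exact ⟨i, h⟩
  choose idx hidx using hs
  refine ⟨fun p => if h : p ∈ P then u (idx p h) else [], ?_, ?_⟩
  · intro p hp
    simp only [hp, dif_pos]
    refine ⟨?_, hu _⟩
    have := h1 (idx p hp)
    rw [hF, hidx p hp, AB_split] at this
    exact this.1
  · intro p hp q hq hpq
    simp only [hp, hq, dif_pos]
    have hne : idx p hp ≠ idx q hq := by
      intro h
      apply hpq
      rw [← hidx p hp, ← hidx q hq, h]
    have := h2 _ _ hne
    intro z hz hz'
    refine this (a := z) ?_ ?_
    · rw [hF, hidx]; simp at hz ⊢; tauto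
    · rw [hF, hidx]; simp at hz' ⊢; tauto

theorem linked_right {E : Finset (V × V)} {A : Set V} {P : Finset V} {s : ℕ} (hP : P.card = s)
    (h : Linked E P A s) : ∃ u : V → List V, (∀ p ∈ P, AB E {p} A (p :: u p) ∧ ∀ z ∈ u p, z ∉ P) ∧
      ∀ p ∈ P, ∀ q ∈ P, p ≠ q → List.Disjoint (p :: u p) (q :: u q) := by
  obtain ⟨F, h1, h2⟩ := h
  have h3 : ∀ i, ∃ w p u, F i = w ++ p :: u ∧ p ∈ P ∧ ∀ z ∈ u, z ∉ P := by
    intro i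
    apply last_split
    obtain ⟨a1, a2, a3, a4⟩ := h1 i
    exact ⟨(F i).head a1, a2 _ (List.head?_eq_some_head a1), List.head_mem a1⟩
  choose w f u hF hfP hu using h3
  have hi : Function.Injective f := by
    intro i j hij
    by_contra hne
    refine h2 i j hne (a := f i) ?_ ?_
    · rw [hF i]; simp
    · rw [hF j, hij]; simp
  have hs : ∀ p, p ∈ P → ∃ i, f i = p := by
    have : Finset.univ.image f = P := by
      apply Finset.eq_of_subset_of_card_le
      · intro x hx
        obtain ⟨i, _, rfl⟩ := Finset.mem_image.1 hx
        exact hfP i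
      · rw [Finset.card_image_of_injective _ hi]; simp [hP]
    intro p hp
    rw [← this] at hp
    obtain ⟨i, _, h⟩ := Finset.mem_image.1 hp
    exact ⟨i, h⟩
  choose idx hidx using hs
  refine ⟨fun p => if h : p ∈ P then u (idx p h) else [], ?_, ?_⟩
  · intro p hp
    simp only [hp, dif_pos]
    refine ⟨?_, hu _⟩
    have := h1 (idx p hp)
    rw [hF, hidx p hp, AB_split] at this
    exact this.2
  · intro p hp q hq hpq
    simp only [hp, hq, dif_pos]
    have hne : idx p hp ≠ idx q hq := by
      intro h
      apply hpq
      rw [← hidx p hp, ← hidx q hq, h]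
    have := h2 _ _ hne
    intro z hz hz'
    refine this (a := z) ?_ ?_
    · rw [hF, hidx]; simp at hz ⊢; tauto
    · rw [hF, hidx]; simp at hz' ⊢; tauto

theorem menger_aux : ∀ (n : ℕ) (E : Finset (V × V)) (A B : Finset V) (s : ℕ), E.card = n → 
    (∀ S, Sep E A B S → s ≤ S.card) → Linked E (A : Set V) (B : Set V) s := by
  intro n
  induction n with
  | zero =>
    intro E A B s hE hS
    rw [Finset.card_eq_zero] at hE
    subst hE
    have h1 : s ≤ (A ∩ B).card := by
      apply hS
      rintro l ⟨h1, h2, h3, h4⟩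
      rcases l with _ | ⟨x, _ | ⟨y, l⟩⟩
      · exact absurd rfl h1
      · simp at h2 h3
        exact ⟨x, by simp [h2, h3], by simp⟩
      · simp at h4
    obtain ⟨T, hT, hTc⟩ := Finset.exists_subset_card_eq h1
    let e := (Finset.equivFinOfCardEq hTc).symm
    refine ⟨fun i => [(e i : V)], ?_, ?_⟩
    · intro i
      have := hT (e i).2
      rw [Finset.mem_inter] at this
      simp [AB, this.1, this.2]
    · intro i j hij
      simp only [List.disjoint_singleton, List.mem_singleton]
      intro h
      exact hij (e.injective (Subtype.ext h.symm))
  | succ n ih =>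
    intro E A B s hE hS
    have hne : E.Nonempty := by rw [← Finset.card_pos]; omega
    obtain ⟨⟨x, y⟩, hxy⟩ := hne
    have hE' : (E.erase (x, y)).card = n := by rw [Finset.card_erase_of_mem hxy]; omega
    by_cases hcase : ∀ S, Sep (E.erase (x, y)) A B S → s ≤ S.card
    · obtain ⟨F, h1, h2⟩ := ih _ A B s hE' hcase
      exact ⟨F, fun i => (h1 i).mono (Finset.erase_subset _ _) subset_rfl subset_rfl, h2⟩
    push Not at hcase
    obtain ⟨S, hSep, hSc⟩ := hcase
    have sepx : Sep E A B (insert x S) := by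
      intro l hl
      by_contra hcon
      push Not at hcon
      obtain ⟨t, v, rfl⟩ : ∃ t v, l = t ++ [v] := 
        ⟨l.dropLast, l.getLast hl.1, (List.dropLast_append_getLast hl.1).symm⟩
      obtain ⟨z, hz, hz'⟩ := hSep _ (AB_erase_left (y := y) hl
        (fun h => hcon x (by simp) (by simp [h])))
      exact hcon z (by simp [hz]) hz'
    have sepy : Sep E A B (insert y S) := by
      intro l hl
      by_contra hcon
      push Not at hcon
      rcases l with _ | ⟨v, t⟩
      · exact absurd rfl hl.1
      obtain ⟨z, hz, hz'⟩ := hSep _ (AB_erase_right (x := x) hl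
        (fun h => hcon y (by simp) (by simp [h])))
      exact hcon z (by simp [hz]) hz'
    have cx := hS _ sepx
    have cy := hS _ sepy
    have hxS : x ∉ S := by
      intro h; rw [Finset.insert_eq_of_mem h] at cx; omega
    have hyS : y ∉ S := by
      intro h; rw [Finset.insert_eq_of_mem h] at cy; omega
    rw [Finset.card_insert_of_notMem hxS] at cx
    have cP : (insert x S).card = s := by rw [Finset.card_insert_of_notMem hxS]; omega
    have cQ : (insert y S).card = s := by rw [Finset.card_insert_of_notMem hyS]; omega
    have hL : Linked (E.erase (x, y)) (A : Set V) ((insert x S : Finset V) : Set V) s := by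
      apply ih _ A (insert x S) s hE'
      intro T hT
      apply hS
      intro l hl
      obtain ⟨u, p, w, rfl, hp, hu⟩ := first_split _ l (sepx l hl)
      have h1 := (AB_split.1 hl).1
      have h2 := AB_erase_left (x := x) (y := y) h1 (fun h => hu x h (by simp))
      obtain ⟨z, hz, hz'⟩ := hT _ (h2.mono subset_rfl subset_rfl (by simpa using hp))
      refine ⟨z, hz, ?_⟩
      simp at hz' ⊢; tauto
    have hR : Linked (E.erase (x, y)) ((insert y S : Finset V) : Set V) (B : Set V) s := by
      apply ih _ (insert y S) B s hE'
      intro T hT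
      apply hS
      intro l hl
      obtain ⟨u, p, w, rfl, hp, hu⟩ := last_split _ l (sepy l hl)
      have h1 := (AB_split.1 hl).2
      have h2 := AB_erase_right (x := x) (y := y) h1 (fun h => hu y h (by simp))
      obtain ⟨z, hz, hz'⟩ := hT _ (h2.mono subset_rfl (by simpa using hp) subset_rfl)
      refine ⟨z, hz, ?_⟩
      simp at hz' ⊢; tauto
    obtain ⟨u, hu1, hu2⟩ := linked_left cP hL
    obtain ⟨w, hw1, hw2⟩ := linked_right cQ hR
    -- crossing
    have cross : ∀ p ∈ insert x S, ∀ q ∈ insert y S, p ≠ q → 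
        List.Disjoint (u p ++ [p]) (q :: w q) := by
      intro p hp q hq hpq v hv hv'
      obtain ⟨α, β, e1⟩ := List.append_of_mem hv
      obtain ⟨γ, δ, e2⟩ := List.append_of_mem hv'
      have hα : ∀ z ∈ α, z ∉ insert x S := by
        intro z hz
        apply (hu1 p hp).2
        have h5 : α <+: u p := by
          rcases List.eq_nil_or_concat β with rfl | ⟨β', t, rfl⟩
          · have := List.append_inj' (s₁ := u p) (t₁ := [p]) (s₂ := α) (t₂ := [v]) e1 rfl
            rw [this.1]
          · have e1' : u p ++ [p] = (α ++ v :: β') ++ [t] := by rw [e1]; simp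
            have := List.append_inj' e1' rfl
            rw [this.1]
            exact List.prefix_append _ _
        exact h5.subset hz
      have hδ : ∀ z ∈ δ, z ∉ insert y S := by
        intro z hz
        apply (hw1 q hq).2
        rcases γ with _ | ⟨t, γ⟩
        · simp at e2
          rw [e2.2]; exact hz
        · simp at e2
          rw [e2.2]; simp [hz]
      have a1 := (hu1 p hp).1
      have a2 := (hw1 q hq).1
      rw [e1, AB_split] at a1
      rw [e2, AB_split] at a2
      obtain ⟨z, hz, hz'⟩ := hSep _ (AB_split.2 ⟨a1.1, a2.2⟩)
      have hzv : z = v := by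
        rw [List.mem_append, List.mem_cons] at hz'
        rcases hz' with h | h | h
        · exact absurd (by simp [hz]) (hα z h)
        · exact h
        · exact absurd (by simp [hz]) (hδ z h)
      subst hzv
      have p1 : z = p := by
        rcases List.mem_append.1 hv with h | h
        · exact absurd (by simp [hz]) ((hu1 p hp).2 z h)
        · simpa using h
      have p2 : z = q := by
        rcases List.mem_cons.1 hv' with h | h
        · exact h
        · exact absurd (by simp [hz]) ((hw1 q hq).2 z h)
      exact hpq (p1.symm.trans p2)
    -- glue
    let e := (Finset.equivFinOfCardEq cP).symm
    let φ : V → V := fun p => if p = x then y else p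
    have hφ : ∀ p ∈ insert x S, φ p ∈ insert y S := by
      intro p hp
      simp only [φ]
      split_ifs with h
      · simp
      · rw [Finset.mem_insert] at hp ⊢; tauto
    have hφi : ∀ p ∈ insert x S, ∀ q ∈ insert x S, p ≠ q → φ p ≠ φ q := by
      intro p hp q hq hpq
      simp only [φ]
      rw [Finset.mem_insert] at hp hq
      split_ifs with h h' h'
      · exact absurd (h.trans h'.symm) hpq
      · rintro rfl; tauto
      · rintro rfl; tauto
      · exact hpq
    let H : V → List V := fun p => if p = x then u p ++ p :: (y :: w y) else u p ++ p :: w p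
    have hH : ∀ p ∈ insert x S, AB E A B (H p) := by
      intro p hp
      have b1 := (hu1 p hp).1.mono (Finset.erase_subset _ _) subset_rfl subset_rfl
      have b2 := (hw1 (φ p) (hφ p hp)).1.mono (Finset.erase_subset _ _) subset_rfl subset_rfl
      simp only [H]
      simp only [φ] at b2
      split_ifs with h
      · rw [if_pos h] at b2
        subst h
        rw [AB_split]
        refine ⟨b1, by simp, by simp, ?_, ?_⟩
        · intro b hb
          exact b2.2.2.1 b (by simpa using hb)
        · rw [List.isChain_cons_cons]
          exact ⟨hxy, b2.2.2.2⟩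
      · rw [if_neg h] at b2
        rw [AB_split]
        exact ⟨b1, b2⟩
    have hHm : ∀ p ∈ insert x S, ∀ z ∈ H p, z ∈ u p ++ [p] ∨ z ∈ φ p :: w (φ p) := by
      intro p hp z hz
      simp only [H] at hz
      simp only [φ]
      split_ifs at hz ⊢ with h <;> simp at hz ⊢ <;> tauto
    have hxφ : ∀ p ∈ insert x S, ∀ q ∈ insert x S, p ≠ q → p ≠ φ q ∨ False := by
      intro p hp q hq hpq
      left
      simp only [φ]
      rw [Finset.mem_insert] at hp
      split_ifs with h
      · rintro rfl
        subst h
        tauto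
      · exact hpq
    refine ⟨fun i => H (e i), fun i => hH _ (e i).2, ?_⟩
    intro i j hij z hz hz'
    have hne : (e i : V) ≠ e j := fun h => hij (e.injective (Subtype.ext h))
    have m1 := (e i).2
    simp only at hz hz'
    have m2 := (e j).2
    generalize (e i : V) = p at *
    generalize (e j : V) = q at *
    rcases hHm p m1 z hz with h | h <;> rcases hHm q m2 z hz' with h' | h'
    · exact hu2 p m1 q m2 hne h h'
    · exact cross p m1 (φ q) (hφ q m2) ((hxφ p m1 q m2 hne).resolve_right id) h h'
    · exact cross q m2 (φ p) (hφ p m1) ((hxφ q m2 p m1 hne.symm).resolve_right id) h' h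
    · exact hw2 _ (hφ p m1) _ (hφ q m2) (hφi p m1 q m2 hne) h h'
end menger
end LC


namespace LC

theorem exists_dup {V : Type*} {l : List V} (h : ¬ l.Nodup) : 
    ∃ α x β γ, l = α ++ x :: (β ++ x :: γ) := by
  induction l with
  | nil => simp at h
  | cons x l ih =>
    rw [List.nodup_cons] at h
    by_cases hx : x ∈ l
    · obtain ⟨β, γ, rfl⟩ := List.append_of_mem hx
      exact ⟨[], x, β, γ, rfl⟩
    · obtain ⟨α, y, β, γ, rfl⟩ := ih (fun h' => h ⟨hx, h'⟩)
      exact ⟨x :: α, y, β, γ, rfl⟩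

theorem trim {V : Type*} {E : Finset (V × V)} {A B : Set V} (hAB : ∀ v ∈ A, v ∉ B)
    {l : List V} (hl : AB E A B l) : ∃ a mid b, a ∈ A ∧ b ∈ B ∧ 
      List.IsChain (fun x y => (x, y) ∈ E) (a :: (mid ++ [b])) ∧ (∀ z ∈ a :: (mid ++ [b]), z ∈ l) ∧
      mid.Nodup ∧ ∀ z ∈ mid, z ∉ A ∧ z ∉ B := by
  classical
  have hex : ∃ n, ∃ m : List V, AB E A B m ∧ (∀ z ∈ m, z ∈ l) ∧ m.length = n := 
    ⟨_, l, hl, fun _ h => h, rfl⟩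
  obtain ⟨m, hm, hsub, hlen⟩ := Nat.find_spec hex
  have hmin : ∀ m', AB E A B m' → (∀ z ∈ m', z ∈ m) → m.length ≤ m'.length := by
    intro m' h1 h2
    rw [hlen]
    exact Nat.find_min' hex ⟨m', h1, fun z hz => hsub z (h2 z hz), rfl⟩
  clear hlen
  rcases m with _ | ⟨a, t⟩
  · exact absurd rfl hm.1
  rcases List.eq_nil_or_concat t with rfl | ⟨mid, b, rfl⟩
  · have h1 : a ∈ A := hm.2.1 a (by simp)
    have h2 : a ∈ B := hm.2.2.1 a (by simp)
    exact absurd h2 (hAB a h1)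
  rw [List.concat_eq_append] at *
  have ha : a ∈ A := hm.2.1 a (by simp)
  have hb : b ∈ B := hm.2.2.1 b (by
    have := List.getLast?_concat (l := a :: mid) (a := b)
    simpa only [List.cons_append, List.concat_eq_append, Option.mem_def] using this)
  refine ⟨a, mid, b, ha, hb, hm.2.2.2, hsub, ?_, ?_⟩
  · by_contra hnd
    obtain ⟨α, x, β, γ, rfl⟩ := exists_dup hnd
    have e1 : a :: ((α ++ x :: (β ++ x :: γ)) ++ [b]) = (a :: α) ++ x :: (β ++ x :: (γ ++ [b])) := by
      simp
    have e2 : a :: ((α ++ x :: (β ++ x :: γ)) ++ [b]) = (a :: α ++ x :: β) ++ x :: (γ ++ [b]) := by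
      simp
    have f1 := hm
    have f2 := hm
    rw [e1, AB_split] at f1
    rw [e2, AB_split] at f2
    have := hmin _ (AB_split.2 ⟨f1.1, f2.2⟩) (by intro z hz; simp at hz ⊢; tauto)
    simp at this
    omega
  · intro z hz
    obtain ⟨α, β, rfl⟩ := List.append_of_mem hz
    have e1 : a :: ((α ++ z :: β) ++ [b]) = (a :: α) ++ z :: (β ++ [b]) := by simp
    have f1 := hm
    rw [e1, AB_split] at f1
    refine ⟨fun hzA => ?_, fun hzB => ?_⟩
    · have := hmin _ (f1.2.mono subset_rfl (by simpa using hzA) subset_rfl)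
        (by intro z hz; simp at hz ⊢; tauto)
      simp at this
      omega
    · have := hmin _ (f1.1.mono subset_rfl subset_rfl (by simpa using hzB))
        (by intro z hz; simp at hz ⊢; tauto)
      simp at this

theorem nat_bound {V : Type} [Fintype V] [DecidableEq V] (G : SimpleGraph V)
    (u v : V) (c1 : G.Walk u u) (c2 : G.Walk v v) (h1 : IsLongestCycle G c1) 
    (h2 : IsLongestCycle G c2) (k : ℕ) (hk : k = (c1.support.toFinset ∩ c2.support.toFinset).card)
    (S : Finset V) (hS : IsMinSeparator G (c1.support.toFinset \ c2.support.toFinset)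
            (c2.support.toFinset \ c1.support.toFinset) S) (m : ℕ) (hm : (k + 1) ^ 3 < m ^ 5) :
    S.card ≤ k + 8 * m * (k + 1) := by
  classical
  obtain ⟨C1, len1, M1⟩ := cycL_of_walk c1 h1.1
  obtain ⟨C2, len2, M2⟩ := cycL_of_walk c2 h2.1
  set l1 := c1.support.tail
  set l2 := c2.support.tail
  have hlen : c1.length = c2.length := le_antisymm (h2.2 _ _ h1.1) (h1.2 _ _ h2.1)
  set A := c1.support.toFinset \ c2.support.toFinset with hA
  set B := c2.support.toFinset \ c1.support.toFinset with hB
  have memA : ∀ z, z ∈ A ↔ z ∈ l1 ∧ z ∉ l2 := by intro z; simp [hA, M1, M2]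
  have memB' : ∀ z, z ∈ B ↔ z ∈ l2 ∧ z ∉ l1 := by intro z; simp [hB, M1, M2]
  have memC : ∀ z, z ∈ c1.support.toFinset ∩ c2.support.toFinset ↔ z ∈ l1 ∧ z ∈ l2 := by
    intro z; simp [M1, M2]
  set E : Finset (V × V) := Finset.univ.filter (fun e => G.Adj e.1 e.2) with hE
  have hEm : ∀ x y, (x, y) ∈ E ↔ G.Adj x y := by intro x y; simp [hE]
  obtain ⟨F, hF1, hF2⟩ := menger_aux E.card E A B S.card rfl (by
    intro S' hS'
    apply hS.2
    intro a b ha hb p _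
    apply hS' p.support
    refine ⟨by simp, ?_, ?_, ?_⟩
    · intro x hx
      rw [List.head?_eq_some_head (by simp)] at hx
      simp at hx
      subst hx; exact ha
    · intro x hx
      rw [List.getLast?_eq_getLast_of_ne_nil (by simp)] at hx
      simp at hx
      subst hx; exact hb
    · simp only [hEm]
      exact p.isChain_adj_support)
  let P : Fin S.card → Prop := fun i => ∀ z ∈ F i, ¬ (z ∈ l1 ∧ z ∈ l2)
  have hbad : (Finset.univ.filter (fun i => ¬ P i)).card ≤ k := by
    have hch : ∀ i, ∃ z, ¬ P i → z ∈ F i ∧ z ∈ l1 ∧ z ∈ l2 := by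
      intro i
      by_cases h : P i
      · exact ⟨u, fun h' => absurd h h'⟩
      · simp only [P, not_forall, not_not] at h
        obtain ⟨z, hz, hz'⟩ := h
        exact ⟨z, fun _ => ⟨hz, hz'⟩⟩
    choose f hf using hch
    rw [hk]
    refine Finset.card_le_card_of_injOn f ?_ ?_
    · intro i hi
      have := hf i (by simpa using hi)
      exact Finset.mem_coe.2 ((memC _).2 this.2)
    · intro i hi j hj hij
      have h1 := hf i (by simpa using hi)
      have h2 := hf j (by simpa using hj)
      by_contra hne
      exact hF2 i j hne h1.1 (hij ▸ h2.1)
  have htrim := fun i : {i // P i} => trim (A := (A : Set V)) (B := (B : Set V)) 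
    (fun z hz hz' => ((memA z).1 hz).2 ((memB' z).1 hz').1) (hF1 i.1)
  choose a mid b ha hb hch hsub hnd hav using htrim
  have Sy : Sys G l1 l2 c1.length a b mid :=
    { c1 := C1
      c2 := C2
      len1 := len1
      len2 := len2.trans hlen.symm
      mx := by
        intro l hl
        obtain ⟨w, c, hc, hcl⟩ := hl.exists_walk
        rw [← hcl]
        exact h1.2 _ _ hc
      a1 := fun i => ((memA _).1 (ha i)).1
      a2 := fun i => ((memA _).1 (ha i)).2
      b2 := fun i => ((memB' _).1 (hb i)).1
      b1 := fun i => ((memB' _).1 (hb i)).2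
      pc := fun i => (hch i).imp (fun _ _ h => (hEm _ _).1 h)
      pn := hnd
      p1 := by
        intro i z hz
        have h3 := hav i z hz
        have h4 := i.2 z (hsub i z (by simp [hz]))
        rw [Finset.mem_coe, Finset.mem_coe, memA, memB'] at h3
        tauto
      pd := by
        intro i j hij z hz hz'
        exact hF2 i.1 j.1 (fun h => hij (Subtype.ext h)) (hsub i z (by simp [hz])) 
          (hsub j z (by simp [hz']))
      ai := by
        intro i j hij
        by_contra hne
        exact hF2 i.1 j.1 (fun h => hne (Subtype.ext h)) (hsub i (a i) (by simp)) 
          (hsub j (a i) (by simp [hij]))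
      bi := by
        intro i j hij
        by_contra hne
        exact hF2 i.1 j.1 (fun h => hne (Subtype.ext h)) (hsub i (b i) (by simp)) 
          (hsub j (b i) (by simp [hij])) }
  have hseg : ∀ (l l' : List V), l.Nodup → (∀ z, z ∈ l ∧ z ∈ l' → z ∈ l1 ∧ z ∈ l2) → 
      ∀ x, seg l l' x < k + 1 := by
    intro l l' hl hh x
    refine Nat.lt_succ_of_le ((seg_le x).trans ?_)
    rw [List.countP_eq_length_filter, ← List.toFinset_card_of_nodup (hl.filter _), hk]
    apply Finset.card_le_card
    intro z hz
    rw [memC]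
    apply hh
    simpa using hz
  have hcnt := Sy.count (k + 1) m (fun i => hseg l1 l2 C1.1 (fun z h => h) _)
    (fun i => hseg l2 l1 C2.1 (fun z h => h.symm) _) hm (by omega)
  rw [Fintype.card_subtype] at hcnt
  have := Finset.card_filter_add_card_filter_not (s := (Finset.univ : Finset (Fin S.card))) (p := P)
  rw [Finset.card_univ, Fintype.card_fin] at this
  have hc' : (Finset.univ.filter P).card ≤ 8 * m * (k + 1) := by
    refine le_trans (le_of_eq ?_) hcnt.le
    congr
  omega

theorem real_bound (k : ℕ) (hk : 0 < k) (s : ℕ) 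
    (h : ∀ m : ℕ, (k + 1) ^ 3 < m ^ 5 → s ≤ k + 8 * m * (k + 1)) :
    (s : ℝ) ≤ 100 * (k : ℝ) ^ ((8 : ℝ) / 5) := by
  set K : ℝ := (k : ℝ) + 1 with hK
  have hk1 : (1 : ℝ) ≤ k := by exact_mod_cast hk
  have hK1 : 1 ≤ K := by linarith
  have hK0 : 0 ≤ K := by linarith
  set r : ℝ := K ^ ((3 : ℝ) / 5) with hr
  have hr1 : 1 ≤ r := Real.one_le_rpow hK1 (by norm_num)
  have hr5 : r ^ 5 = K ^ 3 := by
    rw [hr, ← Real.rpow_natCast, ← Real.rpow_mul hK0, ← Real.rpow_natCast]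
    norm_num
  set m := ⌊r⌋₊ + 1 with hm
  have hm1 : r < m := by rw [hm]; push_cast; exact Nat.lt_floor_add_one r
  have hm2 : (m : ℝ) ≤ 2 * r := by
    have := Nat.floor_le (by linarith : 0 ≤ r)
    rw [hm]; push_cast; linarith
  have h1 := h m (by
    have : (K : ℝ) ^ 3 < (m : ℝ) ^ 5 := by
      rw [← hr5]
      exact pow_lt_pow_left₀ hm1 (by linarith) (by norm_num)
    rw [hK] at this
    exact_mod_cast this)
  have h2 : (s : ℝ) ≤ k + 8 * m * K := by rw [hK]; exact_mod_cast h1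
  have h3 : r * K = K ^ ((8 : ℝ) / 5) := by
    rw [hr]
    nth_rewrite 2 [← Real.rpow_one K]
    rw [← Real.rpow_add (by linarith)]
    norm_num
  have h4 : K ^ ((8 : ℝ) / 5) ≤ 4 * (k : ℝ) ^ ((8 : ℝ) / 5) := by
    calc K ^ ((8 : ℝ) / 5) ≤ (2 * k : ℝ) ^ ((8 : ℝ) / 5) := 
          Real.rpow_le_rpow hK0 (by linarith) (by norm_num)
      _ = 2 ^ ((8 : ℝ) / 5) * (k : ℝ) ^ ((8 : ℝ) / 5) := Real.mul_rpow (by norm_num) (by linarith)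
      _ ≤ 4 * (k : ℝ) ^ ((8 : ℝ) / 5) := by
        apply mul_le_mul_of_nonneg_right _ (by positivity)
        calc (2 : ℝ) ^ ((8 : ℝ) / 5) ≤ 2 ^ (2 : ℝ) := 
              Real.rpow_le_rpow_of_exponent_le (by norm_num) (by norm_num)
          _ = 4 := by norm_num
  have h5 : (k : ℝ) ≤ (k : ℝ) ^ ((8 : ℝ) / 5) := by
    nth_rewrite 1 [← Real.rpow_one (k : ℝ)]
    exact Real.rpow_le_rpow_of_exponent_le hk1 (by norm_num)
  have h6 : (m : ℝ) * K ≤ 2 * (r * K) := by nlinarith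
  have h7 : 0 ≤ (k : ℝ) ^ ((8 : ℝ) / 5) := by positivity
  nlinarith

end LC

theorem separator_size_bound :
    ∃ C : ℝ, 0 < C ∧
      ∀ (V : Type) [Fintype V] [DecidableEq V] (G : SimpleGraph V)
        (u v : V) (c1 : G.Walk u u) (c2 : G.Walk v v),
        IsLongestCycle G c1 → IsLongestCycle G c2 →
        ∀ k : ℕ, k = (c1.support.toFinset ∩ c2.support.toFinset).card → 0 < k →
        ∀ S : Finset V,
          IsMinSeparator G (c1.support.toFinset \ c2.support.toFinset)
            (c2.support.toFinset \ c1.support.toFinset) S →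
          (S.card : ℝ) ≤ C * (k : ℝ) ^ ((8 : ℝ) / 5) := by
  refine ⟨100, by norm_num, ?_⟩
  intro V _ _ G u v c1 c2 h1 h2 k hk hk0 S hS
  exact LC.real_bound k hk0 S.card (fun m hm => LC.nat_bound G u v c1 c2 h1 h2 k hk S hS m hm)
end

section
/- Let G be a finite simple graph, let C1 and C2 be vertex-disjoint cycles in G, and let P1 and P2 be two paths in G such that: P1 and P2 are vertex-disjoint from each other; each Pi has one endpoint on C1 and the other endpoint on C2; and no internal vertex of P1 or P2 lies on C1 or C2. Then G contains a cycle C whose length satisfies 2·length(C) > length(C1) + length(C2). -/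
open SimpleGraph

theorem aux_path_append {V : Type} {G : SimpleGraph V} {a b c : V} (p : G.Walk a b)
    (q : G.Walk b c) (hp : p.IsPath) (hq : q.IsPath)
    (h : ∀ x ∈ p.support, x ∈ q.support → x = b) : (p.append q).IsPath := by
  rw [Walk.isPath_def] at *
  rw [Walk.support_append]
  rw [Walk.support_eq_cons q] at hq h
  refine List.Nodup.append hp (List.nodup_cons.1 hq).2 ?_
  intro x hx hx'
  have := h x hx (List.mem_cons_of_mem _ hx')
  subst this
  exact (List.nodup_cons.1 hq).1 hx'

theorem aux_long_arc {V : Type} {G : SimpleGraph V} {u a b : V} (c : G.Walk u u)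
    (hc : c.IsCycle) (ha : a ∈ c.support) (hb : b ∈ c.support) (hab : a ≠ b) :
    ∃ q : G.Walk a b, q.IsPath ∧ (∀ x ∈ q.support, x ∈ c.support) ∧ c.length ≤ 2 * q.length := by
  classical
  have hc' : (c.rotate a ha).IsCycle := (Walk.isCycle_rotate ha).2 hc
  have hs : ∀ x, x ∈ (c.rotate a ha).support ↔ x ∈ c.support := fun x =>
    Walk.mem_support_rotate_iff c a ha
  have hl : (c.rotate a ha).length = c.length := Walk.length_rotate c a ha
  generalize c.rotate a ha = d at hc' hs hl
  have hb' := (hs b).2 hb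
  have e := d.take_spec hb'
  have hl' : (d.takeUntil b hb').length + (d.dropUntil b hb').length = d.length := by
    rw [← Walk.length_append, e]
  have hc2 := hc'
  rw [← e] at hc2
  have n1 : ¬ (d.takeUntil b hb').Nil := fun h => hab h.eq
  have n2 : ¬ (d.dropUntil b hb').Nil := fun h => hab h.eq.symm
  rcases le_total (d.takeUntil b hb').length (d.dropUntil b hb').length with h | h
  · refine ⟨(d.dropUntil b hb').reverse, (hc2.isPath_of_append_right n1).reverse, ?_, ?_⟩
    · intro x hx
      rw [Walk.support_reverse, List.mem_reverse] at hx
      exact (hs x).1 (d.support_dropUntil_subset hb' hx)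
    · rw [Walk.length_reverse]; omega
  · refine ⟨d.takeUntil b hb', hc2.isPath_of_append_left n2, ?_, by omega⟩
    intro x hx
    exact (hs x).1 (d.support_takeUntil_subset hb' hx)

theorem two_cycles_two_paths_give_longer_cycle
    (V : Type) [Fintype V] (G : SimpleGraph V)
    (u1 u2 : V) (c1 : G.Walk u1 u1) (c2 : G.Walk u2 u2)
    (hc1 : c1.IsCycle) (hc2 : c2.IsCycle)
    (hdisj : ∀ x ∈ c1.support, x ∉ c2.support)
    (a1 b1 a2 b2 : V) (p1 : G.Walk a1 b1) (p2 : G.Walk a2 b2)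
    (hp1 : p1.IsPath) (hp2 : p2.IsPath)
    (ha1 : a1 ∈ c1.support) (hb1 : b1 ∈ c2.support)
    (ha2 : a2 ∈ c1.support) (hb2 : b2 ∈ c2.support)
    -- `p1` and `p2` are vertex-disjoint from each other:
    (hpdisj : ∀ x ∈ p1.support, x ∉ p2.support)
    -- no internal vertex of `p1` or `p2` lies on `c1` or `c2`:
    (hint1 : ∀ x ∈ p1.support, x ≠ a1 → x ≠ b1 → x ∉ c1.support ∧ x ∉ c2.support)
    (hint2 : ∀ x ∈ p2.support, x ≠ a2 → x ≠ b2 → x ∉ c1.support ∧ x ∉ c2.support) :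
    ∃ (w : V) (c : G.Walk w w), c.IsCycle ∧ c1.length + c2.length < 2 * c.length := by
  have s1 := p1.start_mem_support
  have e1 := p1.end_mem_support
  have s2 := p2.start_mem_support
  have e2 := p2.end_mem_support
  have hab : a1 ≠ a2 := fun h => hpdisj a1 s1 (h ▸ s2)
  have hbb : b1 ≠ b2 := fun h => hpdisj b1 e1 (h ▸ e2)
  have h11 : a1 ≠ b1 := fun h => hdisj a1 ha1 (h ▸ hb1)
  obtain ⟨q1, hq1, hs1, hl1⟩ := aux_long_arc c1 hc1 ha1 ha2 hab
  obtain ⟨q2, hq2, hs2, hl2⟩ := aux_long_arc c2 hc2 hb1 hb2 hbb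
  have hR1 : (q2.append p2.reverse).IsPath := by
    refine aux_path_append _ _ hq2 hp2.reverse ?_
    intro x hx hx'
    rw [Walk.support_reverse, List.mem_reverse] at hx'
    by_contra hne
    by_cases hxa : x = a2
    · exact hdisj a2 ha2 (hxa ▸ hs2 x hx)
    · exact (hint2 x hx' hxa hne).2 (hs2 x hx)
  have hR : ((q2.append p2.reverse).append q1.reverse).IsPath := by
    refine aux_path_append _ _ hR1 hq1.reverse ?_
    intro x hx hx'
    rw [Walk.support_reverse, List.mem_reverse] at hx'
    rw [Walk.mem_support_append_iff, Walk.support_reverse, List.mem_reverse] at hx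
    by_contra hne
    rcases hx with hx | hx
    · exact hdisj x (hs1 x hx') (hs2 x hx)
    · by_cases hxb : x = b2
      · exact hdisj x (hs1 x hx') (hxb ▸ hb2)
      · exact (hint2 x hx hne hxb).1 (hs1 x hx')
  have hmem : ∀ x, x ∈ ((q2.append p2.reverse).append q1.reverse).support ↔
      ((x ∈ q2.support ∨ x ∈ p2.support) ∨ x ∈ q1.support) := by
    intro x
    simp only [Walk.mem_support_append_iff, Walk.support_reverse, List.mem_reverse]
  have hlen : ((q2.append p2.reverse).append q1.reverse).length =
      q2.length + p2.length + q1.length := by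
    simp only [Walk.length_append, Walk.length_reverse]
  have l1 := hc1.three_le_length
  have l2 := hc2.three_le_length
  generalize (q2.append p2.reverse).append q1.reverse = R at hR hmem hlen
  have hpos : 0 < p1.length := by
    rcases Nat.eq_zero_or_pos p1.length with h | h
    · exact absurd (Walk.eq_of_length_eq_zero h) h11
    · exact h
  refine ⟨a1, p1.append R, hp1.isCycle_append hR ?_ (Or.inr (by omega)), ?_⟩
  · intro x hx hx'
    have n1 := hp1.support_nodup
    have n2 := hR.support_nodup
    rw [← Walk.cons_tail_support] at n1 n2
    have hxa : x ≠ a1 := fun h => (List.nodup_cons.1 n1).1 (h ▸ hx)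
    have hxb : x ≠ b1 := fun h => (List.nodup_cons.1 n2).1 (h ▸ hx')
    have m1 := List.mem_of_mem_tail hx
    have hi := hint1 x m1 hxa hxb
    rcases (hmem x).1 (List.mem_of_mem_tail hx') with (h | h) | h
    · exact hi.2 (hs2 x h)
    · exact hpdisj x m1 h
    · exact hi.1 (hs1 x h)
  · rw [Walk.length_append]; omega
end
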